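/- arXiv:2204.07858 — 2 statements merged into one kernel-verified Lean document; each statement's English description precedes it below -/
import Mathlib

section
/- Let n ≥ 4 be an even integer. Fix the symmetric (n+2)×(n+2) matrix g with entries (indices 0,…,n+1): g_{ij} = 2 if 0 ≤ i,j ≤ n and i+j = n, g_{n+1,n+1} = 2, and g_{ij} = 0 otherwise; g is invertible with inverse (g^{ij}). Let F be a ℂ-analytic function on an open neighborhood U of 0 in ℂ^{n+2} (coordinates y_0,…,y_{n+1}) such that: (a) F(0) = 0 and all first and second partial derivatives of F vanish at 0; (b) ∂_{y_0}∂_{y_a}∂_{y_b} F = g_{ab} identically on U, for all a,b; (c) for all a,b,c,d, Σ_{i,j=0}^{n+1} (∂_{y_a}∂_{y_b}∂_{y_i}F) g^{ij} (∂_{y_j}∂_{y_c}∂_{y_d}F) = Σ_{i,j=0}^{n+1} (∂_{y_a}∂_{y_c}∂_{y_i}F) g^{ij} (∂_{y_j}∂_{y_b}∂_{y_d}F) on U (WDVV); (d) the function n ∂_{y_1}F + Σ_{i=0}^{n} (1−i) y_i ∂_{y_i}F + (1 − n/2) y_{n+1} ∂_{y_{n+1}}F − (3−n) F coincides on U with a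 polynomial of total degree ≤ 2 (Euler condition); (e) the third partial derivatives of F at 0 are: ∂_{n+1}∂_{n+1}∂_0 F(0) = 2, ∂_{n+1}∂_{n+1}∂_n F(0) = −4, ∂_i∂_j∂_k F(0) = 2 when 0 ≤ i,j,k ≤ n and i+j+k = n, ∂_i∂_{n−i}∂_n F(0) = 4 for 1 ≤ i ≤ n−1, ∂_i∂_j∂_k F(0) = 8 when 0 ≤ i,j,k ≤ n, i+j+k = 2n and i,j,k ≠ n, ∂_n∂_n∂_n F(0) = 8, and all other third partial derivatives at 0 vanish. Then for every m ≥ 3 and every choice of indices i_1, …, i_m ∈ {0,…,n+1} such that the number of indices equal to n+1 is odd, the iterated partial derivative (∂_{y_{i_1}}⋯∂_{y_{i_m}} F)(0) = 0. -/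
open Finset

/-- The partial derivative `∂F/∂yᵢ` of a function `F` on `ℂ^{n+2}` (coordinates
`y 0, …, y (n+1)`), as a function on `ℂ^{n+2}`. -/
noncomputable def pd (n : ℕ) (i : Fin (n + 2)) (F : (Fin (n + 2) → ℂ) → ℂ) :
    (Fin (n + 2) → ℂ) → ℂ :=
  fun y => deriv (fun t => F (Function.update y i t)) (y i)

/-- The flat metric `g`: `g_{ij} = 2` if `0 ≤ i, j ≤ n` and `i + j = n`, `g_{n+1,n+1} = 2`,
and `g_{ij} = 0` otherwise. -/
noncomputable def gmat (n : ℕ) (i j : Fin (n + 2)) : ℂ :=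
  if ((i : ℕ) ≤ n ∧ (j : ℕ) ≤ n ∧ (i : ℕ) + (j : ℕ) = n) ∨
      ((i : ℕ) = n + 1 ∧ (j : ℕ) = n + 1) then 2 else 0

/-- The inverse metric `g^{ij}`: `g^{ij} = 1/2` at exactly the entries where `g_{ij} = 2`,
and `0` elsewhere; this is the inverse matrix of `gmat n`. -/
noncomputable def ginv (n : ℕ) (i j : Fin (n + 2)) : ℂ :=
  if ((i : ℕ) ≤ n ∧ (j : ℕ) ≤ n ∧ (i : ℕ) + (j : ℕ) = n) ∨
      ((i : ℕ) = n + 1 ∧ (j : ℕ) = n + 1) then 1 / 2 else 0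

open Classical in
/-- The prescribed third partial derivatives at the origin (the length-3 correlators of the
quadric `Qⁿ`): as a symmetric function of the multiset of indices `{a, b, c}`,
`{n+1, n+1, 0} ↦ 2`, `{n+1, n+1, n} ↦ −4`, `{i, j, k} ↦ 2` if `i,j,k ≤ n` and `i+j+k = n`,
`{i, n−i, n} ↦ 4` for `1 ≤ i ≤ n−1`, `{i, j, k} ↦ 8` if `i,j,k ≤ n`, `i+j+k = 2n` and
`i,j,k ≠ n`, `{n, n, n} ↦ 8`, and `0` otherwise. -/
noncomputable def corr3 (n : ℕ) (a b c : Fin (n + 2)) : ℂ :=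
  if ({(a : ℕ), (b : ℕ), (c : ℕ)} : Multiset ℕ) = {n + 1, n + 1, 0} then 2
  else if ({(a : ℕ), (b : ℕ), (c : ℕ)} : Multiset ℕ) = {n + 1, n + 1, n} then -4
  else if (a : ℕ) ≤ n ∧ (b : ℕ) ≤ n ∧ (c : ℕ) ≤ n ∧ (a : ℕ) + (b : ℕ) + (c : ℕ) = n then 2
  else if ∃ i : ℕ, 1 ≤ i ∧ i ≤ n - 1 ∧
      ({(a : ℕ), (b : ℕ), (c : ℕ)} : Multiset ℕ) = {i, n - i, n} then 4
  else if (a : ℕ) ≤ n ∧ (b : ℕ) ≤ n ∧ (c : ℕ) ≤ n ∧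
      (a : ℕ) + (b : ℕ) + (c : ℕ) = 2 * n ∧ (a : ℕ) ≠ n ∧ (b : ℕ) ≠ n ∧ (c : ℕ) ≠ n then 8
  else if ({(a : ℕ), (b : ℕ), (c : ℕ)} : Multiset ℕ) = {n, n, n} then 8
  else 0

/-- `F` is a potential of the Frobenius manifold mirror to the quadric `Qⁿ` on the open
neighborhood `U` of `0`: `F` is `ℂ`-analytic on `U`; `F` and its first and second partial
derivatives vanish at `0`; `∂₀∂ₐ∂_b F = g_{ab}` on `U` (flat identity `∂_{y₀}`); the WDVV
equations hold on `U`; the Euler-field combination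
`n ∂_{y₁}F + ∑_{i=0}^{n} (1−i) yᵢ ∂_{yᵢ}F + (1 − n/2) y_{n+1} ∂_{y_{n+1}}F − (3−n) F`
coincides on `U` with a polynomial of total degree `≤ 2`; and the third partial derivatives
at `0` are the prescribed length-3 correlators `corr3` (all others vanishing). -/
def IsQuadricFrobeniusPotential (n : ℕ) (U : Set (Fin (n + 2) → ℂ))
    (F : (Fin (n + 2) → ℂ) → ℂ) : Prop :=
  AnalyticOnNhd ℂ F U ∧
  F 0 = 0 ∧ (∀ i, pd n i F 0 = 0) ∧ (∀ i j, pd n i (pd n j F) 0 = 0) ∧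
  (∀ a b, ∀ y ∈ U, pd n (0 : Fin (n + 2)) (pd n a (pd n b F)) y = gmat n a b) ∧
  (∀ a b c d, ∀ y ∈ U,
    (∑ i : Fin (n + 2), ∑ j : Fin (n + 2),
        pd n a (pd n b (pd n i F)) y * ginv n i j * pd n j (pd n c (pd n d F)) y)
      = ∑ i : Fin (n + 2), ∑ j : Fin (n + 2),
          pd n a (pd n c (pd n i F)) y * ginv n i j * pd n j (pd n b (pd n d F)) y) ∧
  (∃ p : MvPolynomial (Fin (n + 2)) ℂ, p.totalDegree ≤ 2 ∧
    ∀ y ∈ U,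
      (n : ℂ) * pd n (1 : Fin (n + 2)) F y
          + (∑ i : Fin (n + 1),
              (1 - ((i : ℕ) : ℂ)) * y i.castSucc * pd n i.castSucc F y)
          + (1 - (n : ℂ) / 2) * y (Fin.last (n + 1)) * pd n (Fin.last (n + 1)) F y
          - (3 - (n : ℂ)) * F y
        = MvPolynomial.eval y p) ∧
  (∀ a b c, pd n a (pd n b (pd n c F)) 0 = corr3 n a b c)

/-!
Differentiating the axioms at the origin turns them into identities between correlators `⟨s⟩`, the
derivatives of `F` at `0` along multisets `s` of directions. Write `ε` for the broad direction. The
vanishing of `⟨s⟩` when `ε` occurs an odd number of times in `s` is proved by induction on the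
length of `s`: the insertions `ε` of a differentiated WDVV equation are distributed over two
factors, one of which receives an odd number of them, so only the products with a factor of full
length, or with a short factor known explicitly, survive. The latter are governed by the products
`∂₁ ∘ ∂ₖ = ∂ₖ₊₁` for `1 ≤ k < n` (up to a multiple of the unit `∂₀`), `∂₁ ∘ ∂ₙ = 2 ∂₁`,
`∂₁ ∘ ∂_ε = 0` and `∂ₙ ∘ ∂_ε = -2 ∂_ε`.

If `s` has a narrow insertion, then it is `∂₀`, killed by the flat identity, or `∂₁`, removed by the
Euler condition, or `∂ₖ₊₁ = ∂₁ ∘ ∂ₖ`, which WDVV trades for `∂₁ ∘ ∂_ε = 0`. If `s` consists of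
`k + 3` copies of `ε`, put `X = ⟨1, s⟩` and `Y = ⟨s⟩`. WDVV for the directions `n, 1, ε, ε` and
`k + 1` further insertions `ε` reads `4 X - 4 (k + 1) Y = -4 X`, while the Euler condition reads
`n X = ((k + 1) n / 2 - k) Y`. Together they give `k Y = 0`, and for `k = 0` the correlator is one
of the given ones.
-/

section Antidiagonal

variable {α M : Type*} [AddCommMonoid M]

lemma sum_map_antidiagonal_cons (f : Multiset α × Multiset α → M) (a : α) (s : Multiset α) :
    ((a ::ₘ s).antidiagonal.map f).sum =
      (s.antidiagonal.map fun p => f (p.1, a ::ₘ p.2)).sum +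
        (s.antidiagonal.map fun p => f (a ::ₘ p.1, p.2)).sum := by
  rw [Multiset.antidiagonal_cons, Multiset.map_add, Multiset.sum_add, Multiset.map_map,
    Multiset.map_map]
  rfl

lemma sum_map_antidiagonal_eq_of_fst_ne_zero {f : Multiset α × Multiset α → M} {s : Multiset α}
    (h : ∀ p q, p + q = s → p ≠ 0 → f (p, q) = 0) :
    (s.antidiagonal.map f).sum = f (0, s) := by
  induction s using Multiset.induction_on generalizing f with
  | empty => simp
  | cons a s ih =>
    rw [sum_map_antidiagonal_cons, ih, Multiset.sum_eq_zero, add_zero]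
    · simp only [Multiset.mem_map, Multiset.mem_antidiagonal]
      rintro _ ⟨p, hp, rfl⟩
      exact h _ _ (by rw [Multiset.cons_add, hp]) Multiset.cons_ne_zero
    · exact fun p q hpq => h _ _ (by rw [Multiset.add_cons, hpq])

lemma sum_map_antidiagonal_replicate_succ {f : Multiset α × Multiset α → M} (a : α) (k : ℕ)
    (h : ∀ p q, p + q = Multiset.replicate (k + 1) a → 2 ≤ p.card → f (p, q) = 0) :
    ((Multiset.replicate (k + 1) a).antidiagonal.map f).sum =
      f (0, Multiset.replicate (k + 1) a) + (k + 1) • f ({a}, Multiset.replicate k a) := by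
  induction k generalizing f with
  | zero => simpa using sum_map_antidiagonal_cons f a 0
  | succ k ih =>
    rw [Multiset.replicate_succ, sum_map_antidiagonal_cons, ih,
      sum_map_antidiagonal_eq_of_fst_ne_zero, succ_nsmul _ (k + 1), add_assoc]
    · rfl
    · intro p q hpq hp
      refine h _ _ (by rw [Multiset.cons_add, hpq, ← Multiset.replicate_succ]) ?_
      rw [Multiset.card_cons]
      exact Nat.succ_le_succ (Multiset.card_pos.2 hp)
    · exact fun p q hpq => h _ _ (by rw [Multiset.add_cons, hpq, ← Multiset.replicate_succ])

end Antidiagonal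

lemma triple_eq_triple_iff {α : Type*} {a b c x y z : α} :
    ({a, b, c} : Multiset α) = {x, y, z} ↔
      (a = x ∧ b = y ∧ c = z) ∨ (a = x ∧ b = z ∧ c = y) ∨ (a = y ∧ b = x ∧ c = z) ∨
      (a = y ∧ b = z ∧ c = x) ∨ (a = z ∧ b = x ∧ c = y) ∨ (a = z ∧ b = y ∧ c = x) := by
  constructor
  · intro h
    simp only [Multiset.insert_eq_cons, Multiset.cons_eq_cons, Multiset.singleton_eq_cons_iff,
      Multiset.singleton_inj] at h
    grind [Multiset.singleton_inj, Multiset.cons_zero]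
  · grind [Multiset.insert_eq_cons, Multiset.cons_swap, Multiset.pair_comm]

section Indices

variable {n : ℕ}

/-- The broad coordinate direction. -/
abbrev broadIndex (n : ℕ) : Fin (n + 2) := Fin.last (n + 1)

/-- The last narrow coordinate direction. -/
def topIndex (n : ℕ) : Fin (n + 2) := (Fin.last n).castSucc

/-- Metric duality on coordinate directions: `g_{ij} ≠ 0` exactly when `j` is dual to `i`. -/
def dualIndex (n : ℕ) (i : Fin (n + 2)) : Fin (n + 2) :=
  if (i : ℕ) ≤ n then ⟨n - i, by omega⟩ else i

lemma val_topIndex : (topIndex n : ℕ) = n := rfl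

lemma val_dualIndex (i : Fin (n + 2)) :
    (dualIndex n i : ℕ) = if (i : ℕ) ≤ n then n - i else i := by
  unfold dualIndex
  split_ifs <;> rfl

lemma dualIndex_eq_broadIndex_iff {i : Fin (n + 2)} :
    dualIndex n i = broadIndex n ↔ i = broadIndex n := by
  simp only [Fin.ext_iff, val_dualIndex, Fin.val_last]
  split_ifs <;> omega

lemma dualIndex_involutive : Function.Involutive (dualIndex n) := by
  intro i
  have hi := val_dualIndex i
  rw [Fin.ext_iff, val_dualIndex]
  split_ifs at hi ⊢ <;> omega

lemma one_ne_broadIndex (hn : n ≠ 0) : (1 : Fin (n + 2)) ≠ broadIndex n := by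
  simpa [Fin.ext_iff] using hn

lemma topIndex_ne_broadIndex : topIndex n ≠ broadIndex n :=
  Fin.castSucc_ne_last _

lemma ginv_eq_ite (i j : Fin (n + 2)) :
    ginv n i j = if i = dualIndex n j then 1 / 2 else 0 := by
  unfold ginv
  congr 1
  simp only [Fin.ext_iff, val_dualIndex, eq_iff_iff]
  split_ifs <;> omega

lemma sum_mul_ginv_mul (u v : Fin (n + 2) → ℂ) :
    ∑ i, ∑ j, u i * ginv n i j * v j = 1 / 2 * ∑ j, u (dualIndex n j) * v j := by
  simp only [ginv_eq_ite, mul_ite, ite_mul, mul_zero, zero_mul]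
  rw [Finset.sum_comm, Finset.mul_sum]
  refine Finset.sum_congr rfl fun j _ => ?_
  rw [Finset.sum_ite_eq' Finset.univ, if_pos (Finset.mem_univ _)]
  ring

end Indices

section Corr3

variable {n : ℕ}

lemma exists_triple_eq_narrow_pair_iff {a b c : ℕ} :
    (∃ i : ℕ, 1 ≤ i ∧ i ≤ n - 1 ∧ ({a, b, c} : Multiset ℕ) = {i, n - i, n}) ↔
      (1 ≤ a ∧ 1 ≤ b ∧ a + b = n ∧ c = n) ∨ (1 ≤ a ∧ 1 ≤ c ∧ a + c = n ∧ b = n) ∨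
      (1 ≤ b ∧ 1 ≤ c ∧ b + c = n ∧ a = n) := by
  simp only [triple_eq_triple_iff]
  constructor
  · rintro ⟨i, h⟩
    omega
  · rintro (h | h | h)
    exacts [⟨a, by omega⟩, ⟨a, by omega⟩, ⟨b, by omega⟩]

open Classical in
lemma corr3_eq_ite (i j k : Fin (n + 2)) {a b c : ℕ} (ha : (i : ℕ) = a) (hb : (j : ℕ) = b)
    (hc : (k : ℕ) = c) :
    corr3 n i j k =
      if (a = n + 1 ∧ b = n + 1 ∧ c = 0) ∨ (a = n + 1 ∧ b = 0 ∧ c = n + 1) ∨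
        (a = 0 ∧ b = n + 1 ∧ c = n + 1) then 2
      else if (a = n + 1 ∧ b = n + 1 ∧ c = n) ∨ (a = n + 1 ∧ b = n ∧ c = n + 1) ∨
        (a = n ∧ b = n + 1 ∧ c = n + 1) then -4
      else if a ≤ n ∧ b ≤ n ∧ c ≤ n ∧ a + b + c = n then 2
      else if (1 ≤ a ∧ 1 ≤ b ∧ a + b = n ∧ c = n) ∨ (1 ≤ a ∧ 1 ≤ c ∧ a + c = n ∧ b = n) ∨
        (1 ≤ b ∧ 1 ≤ c ∧ b + c = n ∧ a = n) then 4
      else if a ≤ n ∧ b ≤ n ∧ c ≤ n ∧ a + b + c = 2 * n ∧ a ≠ n ∧ b ≠ n ∧ c ≠ n then 8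
      else if a = n ∧ b = n ∧ c = n then 8
      else 0 := by
  subst ha hb hc
  unfold corr3
  refine if_congr ?_ rfl (if_congr ?_ rfl (if_congr Iff.rfl rfl
    (if_congr exists_triple_eq_narrow_pair_iff rfl (if_congr Iff.rfl rfl (if_congr ?_ rfl rfl)))))
  all_goals
    rw [triple_eq_triple_iff]
    omega

lemma corr3_dualIndex_one_of_lt (i : Fin (n + 2)) {j : Fin (n + 2)}
    (hj : 1 ≤ (j : ℕ)) (hjn : (j : ℕ) < n) :
    corr3 n (dualIndex n i) 1 j =
      if (i : ℕ) = j + 1 then 2 else if (i : ℕ) = 0 ∧ (j : ℕ) + 1 = n then 4 else 0 := by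
  have hi := val_dualIndex i
  rw [corr3_eq_ite _ _ _ rfl (Fin.val_one n) rfl]
  split_ifs at hi ⊢ <;> first | rfl | omega

lemma corr3_dualIndex_topIndex_one (hn : 2 ≤ n) (i : Fin (n + 2)) :
    corr3 n (dualIndex n i) (topIndex n) 1 = if i = 1 then 4 else 0 := by
  have hi := val_dualIndex i
  simp only [Fin.ext_iff, Fin.val_one]
  rw [corr3_eq_ite _ _ _ rfl val_topIndex (Fin.val_one n)]
  split_ifs at hi ⊢ <;> first | rfl | omega

lemma corr3_one_broadIndex (hn : 2 ≤ n) (i : Fin (n + 2)) : corr3 n i 1 (broadIndex n) = 0 := by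
  rw [corr3_eq_ite _ _ _ rfl (Fin.val_one n) (Fin.val_last _)]
  repeat rw [if_neg (by omega)]

lemma corr3_topIndex_broadIndex (hn : n ≠ 0) (i : Fin (n + 2)) :
    corr3 n i (topIndex n) (broadIndex n) = if i = broadIndex n then -4 else 0 := by
  simp only [Fin.ext_iff, Fin.val_last]
  rw [corr3_eq_ite _ _ _ rfl val_topIndex (Fin.val_last _)]
  split_ifs <;> first | rfl | omega

lemma corr3_eq_zero_of_odd {i j k : Fin (n + 2)}
    (h : Odd (({i, j, k} : Multiset (Fin (n + 2))).count (broadIndex n))) : corr3 n i j k = 0 := by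
  rw [Nat.odd_iff] at h
  simp only [Multiset.insert_eq_cons, Multiset.count_cons, Multiset.count_singleton,
    Fin.ext_iff, Fin.val_last] at h
  rw [corr3_eq_ite i j k rfl rfl rfl]
  split_ifs at h ⊢ <;> first | rfl | omega

end Corr3

section QuadricCorrelators

/-- The charges `q i` for which `n ∂₁ + ∑ i, q i * y i * ∂ᵢ` is the Euler field. -/
noncomputable def charge (n : ℕ) (i : Fin (n + 2)) : ℂ :=
  if i = broadIndex n then 1 - (n : ℂ) / 2 else 1 - ((i : ℕ) : ℂ)

/-- The number of broad insertions of a correlator. -/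
abbrev broadCount {n : ℕ} (s : Multiset (Fin (n + 2))) : ℕ := s.count (broadIndex n)

/-- Two correlators glued along an edge: one more insertion in each, contracted with twice the
inverse metric (the factor `2` makes all coefficients equal to `1`). -/
noncomputable def contraction {n : ℕ} (c : Multiset (Fin (n + 2)) → ℂ)
    (s t : Multiset (Fin (n + 2))) : ℂ :=
  ∑ i, c (dualIndex n i ::ₘ s) * c (i ::ₘ t)

/-- The identities between correlators, as functions of the multiset of insertions, obtained by
differentiating the axioms of a quadric Frobenius potential at the origin. -/
structure IsQuadricCorrelator (n : ℕ) (c : Multiset (Fin (n + 2)) → ℂ) : Prop where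
  three : ∀ i j k, c {i, j, k} = corr3 n i j k
  unit : ∀ s, 3 ≤ s.card → c (0 ::ₘ s) = 0
  euler : ∀ s, 3 ≤ s.card → n * c (1 ::ₘ s) = (3 - n - (s.map (charge n)).sum) * c s
  wdvv : ∀ (a b d e : Fin (n + 2)) (s : Multiset (Fin (n + 2))),
    (s.antidiagonal.map fun p => contraction c (a ::ₘ b ::ₘ p.1) (d ::ₘ e ::ₘ p.2)).sum =
      (s.antidiagonal.map fun p => contraction c (a ::ₘ d ::ₘ p.1) (b ::ₘ e ::ₘ p.2)).sum

/-- The induction hypothesis of the vanishing theorem. -/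
def VanishesOnOddBelow {n : ℕ} (c : Multiset (Fin (n + 2)) → ℂ) (m : ℕ) : Prop :=
  ∀ s, 3 ≤ s.card → s.card < m → Odd (broadCount s) → c s = 0

variable {n : ℕ} {c : Multiset (Fin (n + 2)) → ℂ} {s t : Multiset (Fin (n + 2))}

lemma broadCount_cons_of_ne {i : Fin (n + 2)} (hi : i ≠ broadIndex n) :
    broadCount (i ::ₘ s) = broadCount s :=
  Multiset.count_cons_of_ne hi.symm s

lemma odd_broadCount_dualIndex_cons_add (i : Fin (n + 2)) (h : Odd (broadCount (s + t))) :
    Odd (broadCount (dualIndex n i ::ₘ s + i ::ₘ t)) := by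
  rw [Multiset.cons_add, Multiset.add_cons]
  by_cases hi : i = broadIndex n
  · subst hi
    rw [dualIndex_eq_broadIndex_iff.2 rfl, broadCount, Multiset.count_cons_self,
      Multiset.count_cons_self]
    exact h.add_even even_two
  · rwa [broadCount_cons_of_ne (dualIndex_eq_broadIndex_iff.not.2 hi), broadCount_cons_of_ne hi]

lemma mul_eq_zero_of_odd_broadCount_add (h : Odd (broadCount (s + t)))
    (hs : Odd (broadCount s) → c s = 0) (ht : Odd (broadCount t) → c t = 0) : c s * c t = 0 := by
  rw [broadCount, Multiset.count_add, Nat.odd_add'] at h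
  rcases Nat.even_or_odd (broadCount s) with hs' | hs'
  · exact mul_eq_zero_of_right _ (ht (h.2 hs'))
  · exact mul_eq_zero_of_left (hs hs') _

lemma contraction_comm (c : Multiset (Fin (n + 2)) → ℂ) (s t : Multiset (Fin (n + 2))) :
    contraction c s t = contraction c t s := by
  refine (Equiv.sum_comp (Function.Involutive.toPerm _ dualIndex_involutive) _).symm.trans
    (Finset.sum_congr rfl fun i _ => ?_)
  rw [Function.Involutive.coe_toPerm, dualIndex_involutive, mul_comm]

lemma contraction_eq_zero_of_odd (h : Odd (broadCount (s + t)))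
    (hs : ∀ i, Odd (broadCount (i ::ₘ s)) → c (i ::ₘ s) = 0)
    (ht : ∀ i, Odd (broadCount (i ::ₘ t)) → c (i ::ₘ t) = 0) : contraction c s t = 0 :=
  Finset.sum_eq_zero fun i _ =>
    mul_eq_zero_of_odd_broadCount_add (odd_broadCount_dualIndex_cons_add i h) (hs _) (ht _)

namespace IsQuadricCorrelator

section SmallQuantumProduct

lemma contraction_pair (hc : IsQuadricCorrelator n c) (a b : Fin (n + 2))
    (t : Multiset (Fin (n + 2))) :
    contraction c {a, b} t = ∑ i, corr3 n (dualIndex n i) a b * c (i ::ₘ t) := by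
  simp only [← hc.three]
  rfl

lemma contraction_one_narrow (hc : IsQuadricCorrelator n c) (h0 : c (0 ::ₘ t) = 0)
    {x k : Fin (n + 2)} (hk : 1 ≤ (k : ℕ)) (hx : (x : ℕ) = k + 1) (hxn : (x : ℕ) ≤ n) :
    contraction c {1, k} t = 2 * c (x ::ₘ t) := by
  rw [hc.contraction_pair, Finset.sum_eq_single_of_mem x (Finset.mem_univ x),
    corr3_dualIndex_one_of_lt _ hk (by omega), if_pos hx]
  intro i _ hi
  have hik : (i : ℕ) ≠ k + 1 := fun h => hi (Fin.ext (h.trans hx.symm))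
  rw [corr3_dualIndex_one_of_lt _ hk (by omega), if_neg hik]
  by_cases hi0 : i = 0
  · rw [hi0, h0, mul_zero]
  · rw [if_neg fun h => hi0 (Fin.ext h.1), zero_mul]

lemma contraction_topIndex_one (hn : 2 ≤ n) (hc : IsQuadricCorrelator n c)
    (t : Multiset (Fin (n + 2))) : contraction c {topIndex n, 1} t = 4 * c (1 ::ₘ t) := by
  rw [hc.contraction_pair]
  simp [corr3_dualIndex_topIndex_one hn]

lemma contraction_one_broadIndex (hn : 2 ≤ n) (hc : IsQuadricCorrelator n c)
    (t : Multiset (Fin (n + 2))) : contraction c {1, broadIndex n} t = 0 := by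
  rw [hc.contraction_pair]
  simp [corr3_one_broadIndex hn]

lemma contraction_topIndex_broadIndex (hn : n ≠ 0) (hc : IsQuadricCorrelator n c)
    (t : Multiset (Fin (n + 2))) :
    contraction c {topIndex n, broadIndex n} t = -4 * c (broadIndex n ::ₘ t) := by
  rw [hc.contraction_pair]
  simp [corr3_topIndex_broadIndex hn, dualIndex_eq_broadIndex_iff]

end SmallQuantumProduct

lemma eq_zero_of_card_eq_three (hc : IsQuadricCorrelator n c) (hs : s.card = 3)
    (hodd : Odd (broadCount s)) : c s = 0 := by
  obtain ⟨i, j, k, rfl⟩ := Multiset.card_eq_three.1 hs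
  exact (hc.three i j k).trans (corr3_eq_zero_of_odd hodd)

lemma cons_one_eq_zero (hn : n ≠ 0) (hc : IsQuadricCorrelator n c) (hs : 3 ≤ s.card)
    (h : c s = 0) : c (1 ::ₘ s) = 0 := by
  have heuler := hc.euler s hs
  rw [h, mul_zero] at heuler
  exact (mul_eq_zero.1 heuler).resolve_left (Nat.cast_ne_zero.2 hn)

section NarrowInsertion

lemma sum_contraction_one (hn : n ≠ 0) (hc : IsQuadricCorrelator n c)
    {b e f : Fin (n + 2)} {D : Multiset (Fin (n + 2))} (hvan : VanishesOnOddBelow c (D.card + 3))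
    (hodd : Odd (broadCount (b ::ₘ e ::ₘ f ::ₘ D))) :
    (D.antidiagonal.map fun p => contraction c (1 ::ₘ b ::ₘ p.1) (e ::ₘ f ::ₘ p.2)).sum =
      contraction c {1, b} (e ::ₘ f ::ₘ D) := by
  refine sum_map_antidiagonal_eq_of_fst_ne_zero fun p q hpq hp => ?_
  subst hpq
  have hp := Multiset.card_pos.2 hp
  rw [Multiset.card_add] at hvan
  refine contraction_eq_zero_of_odd ?_ (fun i hi => ?_) (fun i hi => ?_)
  · rw [Multiset.cons_add, broadCount_cons_of_ne (one_ne_broadIndex hn)]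
    rwa [Multiset.cons_add, Multiset.add_cons, Multiset.add_cons]
  · rw [Multiset.cons_swap] at hi ⊢
    rw [broadCount_cons_of_ne (one_ne_broadIndex hn)] at hi
    have hcard : 3 ≤ (i ::ₘ b ::ₘ p).card := by
      simp only [Multiset.card_cons]
      omega
    refine hc.cons_one_eq_zero hn hcard (hvan _ hcard ?_ hi)
    simp only [Multiset.card_cons]
    omega
  · refine hvan _ ?_ ?_ hi <;>
    · simp only [Multiset.card_cons]
      omega

lemma contraction_one_comm (hn : n ≠ 0) (hc : IsQuadricCorrelator n c)
    {b e f : Fin (n + 2)} {D : Multiset (Fin (n + 2))} (hvan : VanishesOnOddBelow c (D.card + 3))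
    (hodd : Odd (broadCount (b ::ₘ e ::ₘ f ::ₘ D))) :
    contraction c {1, b} (e ::ₘ f ::ₘ D) = contraction c {1, e} (b ::ₘ f ::ₘ D) := by
  have hwdvv := hc.wdvv 1 b e f D
  rwa [hc.sum_contraction_one hn hvan hodd, hc.sum_contraction_one hn hvan] at hwdvv
  rwa [Multiset.cons_swap]

lemma cons_narrow_cons_broadIndex_eq_zero (hc : IsQuadricCorrelator n c)
    {x d : Fin (n + 2)} {D : Multiset (Fin (n + 2))} (hvan : VanishesOnOddBelow c (D.card + 3))
    (hD : D ≠ 0) (hodd : Odd (broadCount (broadIndex n ::ₘ d ::ₘ D))) (hx : 2 ≤ (x : ℕ))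
    (hxn : (x : ℕ) ≤ n) : c (x ::ₘ broadIndex n ::ₘ d ::ₘ D) = 0 := by
  obtain ⟨k, hk⟩ : ∃ k : Fin (n + 2), (x : ℕ) = k + 1 := ⟨⟨x - 1, by omega⟩, by simp only; omega⟩
  have hkb : k ≠ broadIndex n := Fin.ne_of_val_ne (by rw [Fin.val_last]; omega)
  have hunit : c (0 ::ₘ broadIndex n ::ₘ d ::ₘ D) = 0 := by
    refine hc.unit _ ?_
    have hDcard := Multiset.card_pos.2 hD
    simp only [Multiset.card_cons]
    omega
  have hcomm : contraction c {1, k} (broadIndex n ::ₘ d ::ₘ D) =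
      contraction c {1, broadIndex n} (k ::ₘ d ::ₘ D) :=
    hc.contraction_one_comm (by omega) hvan (by rwa [broadCount_cons_of_ne hkb])
  rw [hc.contraction_one_narrow hunit (by omega) hk hxn, hc.contraction_one_broadIndex (by omega)]
    at hcomm
  exact (mul_eq_zero.1 hcomm).resolve_left two_ne_zero

lemma eq_zero_of_narrow_mem (hn : n ≠ 0) (hc : IsQuadricCorrelator n c) {m : ℕ}
    (hvan : VanishesOnOddBelow c m) (hs : 3 ≤ s.card) (hsm : s.card ≤ m)
    (hodd : Odd (broadCount s)) {x : Fin (n + 2)} (hx : x ≠ broadIndex n) (hxs : x ∈ s) :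
    c s = 0 := by
  obtain hlt | rfl := hsm.lt_or_eq
  · exact hvan s hs hlt hodd
  obtain h3 | h4 := hs.eq_or_lt
  · exact hc.eq_zero_of_card_eq_three h3.symm hodd
  obtain ⟨t, rfl⟩ := Multiset.exists_cons_of_mem hxs
  rw [broadCount_cons_of_ne hx] at hodd
  rw [Multiset.card_cons] at hvan h4
  obtain rfl | hx0 := eq_or_ne x 0
  · exact hc.unit t (by omega)
  obtain rfl | hx1 := eq_or_ne x 1
  · exact hc.cons_one_eq_zero hn (by omega) (hvan t (by omega) (by omega) hodd)
  obtain ⟨u, rfl⟩ := Multiset.exists_cons_of_mem (Multiset.count_pos.1 hodd.pos)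
  rw [Multiset.card_cons] at hvan h4
  obtain ⟨d, hd⟩ := Multiset.card_pos_iff_exists_mem.1 (by omega : 0 < u.card)
  obtain ⟨D, rfl⟩ := Multiset.exists_cons_of_mem hd
  rw [Multiset.card_cons] at hvan h4
  simp only [ne_eq, Fin.ext_iff, Fin.val_zero, Fin.val_one, Fin.val_last] at hx0 hx1 hx
  exact hc.cons_narrow_cons_broadIndex_eq_zero hvan (Multiset.card_pos.1 (by omega)) hodd
    (by omega) (by omega)

end NarrowInsertion

section BroadInsertions

variable {k : ℕ}

lemma cons_one_topIndex_broadIndex_broadIndex (hn : n ≠ 0) (hc : IsQuadricCorrelator n c) :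
    c (1 ::ₘ {topIndex n, broadIndex n, broadIndex n}) = -4 := by
  have htop : charge n (topIndex n) = 1 - n := if_neg topIndex_ne_broadIndex
  have hbroad : charge n (broadIndex n) = 1 - n / 2 := if_pos rfl
  have hthree : c {topIndex n, broadIndex n, broadIndex n} = -4 := by
    rw [Multiset.insert_eq_cons, Multiset.insert_eq_cons, Multiset.cons_swap]
    exact (hc.three _ _ _).trans ((corr3_topIndex_broadIndex hn _).trans (if_pos rfl))
  have heuler := hc.euler {topIndex n, broadIndex n, broadIndex n} (by simp)
  simp only [Multiset.insert_eq_cons, Multiset.map_cons, Multiset.map_singleton,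
    Multiset.sum_cons, Multiset.sum_singleton, htop, hbroad] at heuler hthree ⊢
  refine mul_left_cancel₀ (Nat.cast_ne_zero.2 hn : (n : ℂ) ≠ 0) ?_
  rw [heuler, hthree]
  ring

lemma odd_broadCount_narrow_cons_narrow_cons_add {a b : Fin (n + 2)} (ha : a ≠ broadIndex n)
    (hb : b ≠ broadIndex n) {p q : Multiset (Fin (n + 2))}
    (hpq : p + q = Multiset.replicate (k + 1) (broadIndex n)) (hk : Odd (k + 3)) :
    Odd (broadCount (a ::ₘ b ::ₘ p + broadIndex n ::ₘ broadIndex n ::ₘ q)) := by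
  rw [Multiset.cons_add, Multiset.cons_add, Multiset.add_cons, Multiset.add_cons, hpq,
    ← Multiset.replicate_succ, ← Multiset.replicate_succ, broadCount_cons_of_ne ha,
    broadCount_cons_of_ne hb, broadCount, Multiset.count_replicate_self]
  exact hk

lemma contraction_topIndex_one_broadIndex (hn : n ≠ 0) (hc : IsQuadricCorrelator n c)
    (hvan : VanishesOnOddBelow c (k + 3)) (hk : Odd (k + 3)) (hk0 : k ≠ 0) :
    contraction c {topIndex n, 1, broadIndex n}
        (broadIndex n ::ₘ broadIndex n ::ₘ Multiset.replicate k (broadIndex n)) =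
      -4 * c (Multiset.replicate (k + 3) (broadIndex n)) := by
  have hswap : broadIndex n ::ₘ {topIndex n, 1, broadIndex n} =
      1 ::ₘ {topIndex n, broadIndex n, broadIndex n} := by
    simp only [Multiset.insert_eq_cons]
    rw [Multiset.cons_swap (topIndex n), Multiset.cons_swap (broadIndex n) 1,
      Multiset.cons_swap (broadIndex n)]
  have h4 : 4 < k + 3 := by
    obtain ⟨j, hj⟩ := hk
    omega
  rw [contraction, Finset.sum_eq_single_of_mem (broadIndex n) (Finset.mem_univ _)]
  · rw [dualIndex_eq_broadIndex_iff.2 rfl, hswap,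
      hc.cons_one_topIndex_broadIndex_broadIndex hn]
    rfl
  · intro i _ hi
    refine mul_eq_zero_of_odd_broadCount_add (odd_broadCount_dualIndex_cons_add i
      (odd_broadCount_narrow_cons_narrow_cons_add topIndex_ne_broadIndex
        (one_ne_broadIndex hn) (Multiset.replicate_succ _ k).symm hk))
      (hvan _ (by simp) (by simpa using h4)) fun h => ?_
    exact hc.eq_zero_of_narrow_mem hn hvan (by simp) (by simp) h hi (by simp)

lemma sum_contraction_topIndex_one (hn : 2 ≤ n) (hc : IsQuadricCorrelator n c)
    (hvan : VanishesOnOddBelow c (k + 3)) (hk : Odd (k + 3)) (hk0 : k ≠ 0) :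
    ((Multiset.replicate (k + 1) (broadIndex n)).antidiagonal.map fun p =>
        contraction c (topIndex n ::ₘ 1 ::ₘ p.1) (broadIndex n ::ₘ broadIndex n ::ₘ p.2)).sum =
      4 * c (1 ::ₘ Multiset.replicate (k + 3) (broadIndex n)) -
        4 * (k + 1) * c (Multiset.replicate (k + 3) (broadIndex n)) := by
  have hempty := hc.contraction_topIndex_one hn (Multiset.replicate (k + 3) (broadIndex n))
  have hsingle := hc.contraction_topIndex_one_broadIndex (by omega) hvan hk hk0
  rw [sum_map_antidiagonal_replicate_succ]
  · refine (congrArg₂ (fun u v => u + (k + 1) • v) hempty hsingle).trans ?_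
    simp only [nsmul_eq_mul]
    push_cast
    ring
  · intro p q hpq hp
    have hcard := congrArg Multiset.card hpq
    rw [Multiset.card_add, Multiset.card_replicate] at hcard
    refine contraction_eq_zero_of_odd (odd_broadCount_narrow_cons_narrow_cons_add
      topIndex_ne_broadIndex (one_ne_broadIndex (by omega)) hpq hk) (fun i hi => ?_)
      (fun i hi => hvan _ (by simp) (by simp; omega) hi)
    have hswap : i ::ₘ topIndex n ::ₘ 1 ::ₘ p = 1 ::ₘ topIndex n ::ₘ i ::ₘ p := by
      rw [Multiset.cons_swap (topIndex n), Multiset.cons_swap i, Multiset.cons_swap i]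
    rw [hswap] at hi ⊢
    rw [broadCount_cons_of_ne (one_ne_broadIndex (by omega))] at hi
    refine hc.cons_one_eq_zero (by omega) (by simp; omega) ?_
    exact hc.eq_zero_of_narrow_mem (by omega) hvan (by simp; omega) (by simp; omega) hi
      topIndex_ne_broadIndex (by simp)

lemma sum_contraction_topIndex_broadIndex (hn : 2 ≤ n) (hc : IsQuadricCorrelator n c)
    (hvan : VanishesOnOddBelow c (k + 3)) (hk : Odd (k + 3)) :
    ((Multiset.replicate (k + 1) (broadIndex n)).antidiagonal.map fun p =>
        contraction c (topIndex n ::ₘ broadIndex n ::ₘ p.1) (1 ::ₘ broadIndex n ::ₘ p.2)).sum =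
      -4 * c (1 ::ₘ Multiset.replicate (k + 3) (broadIndex n)) := by
  have h1 : (1 : Fin (n + 2)) ≠ broadIndex n := one_ne_broadIndex (by omega)
  rw [sum_map_antidiagonal_eq_of_fst_ne_zero]
  · refine (hc.contraction_topIndex_broadIndex (by omega) _).trans ?_
    rw [Multiset.cons_swap]
    rfl
  · intro p q hpq hp
    obtain rfl | hq := eq_or_ne q 0
    · exact (contraction_comm _ _ _).trans (hc.contraction_one_broadIndex hn _)
    have hcard := congrArg Multiset.card hpq
    rw [Multiset.card_add, Multiset.card_replicate] at hcard
    have hp := Multiset.card_pos.2 hp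
    have hq := Multiset.card_pos.2 hq
    refine contraction_eq_zero_of_odd ?_ (fun i hi => ?_) (fun i hi => ?_)
    · have hadd : topIndex n ::ₘ broadIndex n ::ₘ p + 1 ::ₘ broadIndex n ::ₘ q =
          topIndex n ::ₘ 1 ::ₘ p + broadIndex n ::ₘ broadIndex n ::ₘ q := by
        simp only [← Multiset.singleton_add]
        abel
      rw [hadd]
      exact odd_broadCount_narrow_cons_narrow_cons_add topIndex_ne_broadIndex h1 hpq hk
    · exact hc.eq_zero_of_narrow_mem (by omega) hvan (by simp) (by simp; omega) hi
        topIndex_ne_broadIndex (by simp)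
    · exact hc.eq_zero_of_narrow_mem (by omega) hvan (by simp) (by simp; omega) hi h1 (by simp)

lemma replicate_broadIndex_eq_zero (hn : 2 ≤ n) (hc : IsQuadricCorrelator n c)
    (hvan : VanishesOnOddBelow c (k + 3)) (hk : Odd (k + 3)) :
    c (Multiset.replicate (k + 3) (broadIndex n)) = 0 := by
  obtain rfl | hk0 := eq_or_ne k 0
  · refine hc.eq_zero_of_card_eq_three (Multiset.card_replicate _ _) ?_
    rwa [broadCount, Multiset.count_replicate_self]
  have hwdvv := hc.wdvv (topIndex n) 1 (broadIndex n) (broadIndex n)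
    (Multiset.replicate (k + 1) (broadIndex n))
  rw [hc.sum_contraction_topIndex_one hn hvan hk hk0,
    hc.sum_contraction_topIndex_broadIndex hn hvan hk] at hwdvv
  have hbroad : charge n (broadIndex n) = 1 - n / 2 := if_pos rfl
  have heuler := hc.euler (Multiset.replicate (k + 3) (broadIndex n)) (by simp)
  rw [Multiset.map_replicate, Multiset.sum_replicate, hbroad, nsmul_eq_mul] at heuler
  push_cast at heuler
  have hmul : (k : ℂ) * c (Multiset.replicate (k + 3) (broadIndex n)) = 0 := by
    linear_combination heuler - (n / 8 : ℂ) * hwdvv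
  exact (mul_eq_zero.1 hmul).resolve_left (Nat.cast_ne_zero.2 hk0)

end BroadInsertions

lemma vanishesOnOddBelow (hn : 2 ≤ n) (hc : IsQuadricCorrelator n c) (m : ℕ) :
    VanishesOnOddBelow c m := by
  induction m with
  | zero => exact fun s _ hs => absurd hs s.card.not_lt_zero
  | succ m ih =>
    intro s h3 hsm hodd
    by_cases hx : ∃ x ∈ s, x ≠ broadIndex n
    · obtain ⟨x, hxs, hx⟩ := hx
      exact hc.eq_zero_of_narrow_mem (by omega) ih h3 (Nat.le_of_lt_succ hsm) hodd hx hxs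
    · push Not at hx
      obtain ⟨k, hk⟩ := Nat.exists_eq_add_of_le' h3
      obtain rfl := Multiset.eq_replicate.2 ⟨hk, hx⟩
      rw [broadCount, Multiset.count_replicate_self] at hodd
      rw [Multiset.card_replicate] at hsm
      refine hc.replicate_broadIndex_eq_zero hn (fun t ht htk => ih t ht (by omega)) hodd

theorem eq_zero_of_odd (hn : 2 ≤ n) (hc : IsQuadricCorrelator n c) (hs : 3 ≤ s.card)
    (hodd : Odd (broadCount s)) : c s = 0 :=
  hc.vanishesOnOddBelow hn _ s hs s.card.lt_succ_self hodd

end IsQuadricCorrelator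

end QuadricCorrelators

section PartialDerivatives

variable {n : ℕ} {U : Set (Fin (n + 2) → ℂ)} {f g : (Fin (n + 2) → ℂ) → ℂ}
  {y : Fin (n + 2) → ℂ}

lemma hasDerivAt_pd (hf : DifferentiableAt ℂ f y) (i : Fin (n + 2)) :
    HasDerivAt (fun t => f (Function.update y i t)) (pd n i f y) (y i) := by
  have hfi : DifferentiableAt ℂ (fun t => f (Function.update y i t)) (y i) := by
    refine DifferentiableAt.comp (y i) ?_ (hasDerivAt_update y i (y i)).differentiableAt
    rwa [Function.update_eq_self]
  exact hfi.hasDerivAt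

lemma pd_eq_fderiv (hf : DifferentiableAt ℂ f y) (i : Fin (n + 2)) :
    pd n i f y = fderiv ℂ f y (Pi.single i 1) := by
  have hf' := hf.hasFDerivAt
  rw [← Function.update_eq_self i y] at hf'
  have hcomp := hf'.comp_hasDerivAt (y i) (hasDerivAt_update y i (y i))
  rw [Function.update_eq_self] at hcomp
  exact (hasDerivAt_pd hf i).unique hcomp

lemma pd_add (hf : DifferentiableAt ℂ f y) (hg : DifferentiableAt ℂ g y) (i : Fin (n + 2)) :
    pd n i (fun z => f z + g z) y = pd n i f y + pd n i g y :=
  ((hasDerivAt_pd hf i).add (hasDerivAt_pd hg i)).deriv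

lemma pd_sum {ι : Type*} {t : Finset ι} {F : ι → (Fin (n + 2) → ℂ) → ℂ}
    (hF : ∀ k ∈ t, DifferentiableAt ℂ (F k) y) (i : Fin (n + 2)) :
    pd n i (fun z => ∑ k ∈ t, F k z) y = ∑ k ∈ t, pd n i (F k) y :=
  (HasDerivAt.fun_sum fun k hk => hasDerivAt_pd (hF k hk) i).deriv

lemma pd_mul (hf : DifferentiableAt ℂ f y) (hg : DifferentiableAt ℂ g y) (i : Fin (n + 2)) :
    pd n i (fun z => f z * g z) y = pd n i f y * g y + f y * pd n i g y := by
  have h := ((hasDerivAt_pd hf i).fun_mul (hasDerivAt_pd hg i)).deriv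
  rwa [Function.update_eq_self] at h

lemma pd_congr (hU : IsOpen U) (h : Set.EqOn f g U) (i : Fin (n + 2)) :
    Set.EqOn (pd n i f) (pd n i g) U := by
  intro y hy
  have hcont : Continuous fun t : ℂ => Function.update y i t :=
    continuous_const.update i continuous_id
  have hmem : Function.update y i (y i) ∈ U := by rwa [Function.update_eq_self]
  refine Filter.EventuallyEq.deriv_eq ?_
  filter_upwards [hcont.continuousAt.eventually (hU.mem_nhds hmem)] with t ht using h ht

lemma analyticOnNhd_pd (hU : IsOpen U) (hf : AnalyticOnNhd ℂ f U) (i : Fin (n + 2)) :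
    AnalyticOnNhd ℂ (pd n i f) U :=
  ((ContinuousLinearMap.apply ℂ ℂ (Pi.single i 1 : Fin (n + 2) → ℂ)).comp_analyticOnNhd
    hf.fderiv).congr hU fun y hy => (pd_eq_fderiv (hf y hy).differentiableAt i).symm

lemma pd_pd_eq_fderiv_fderiv (hU : IsOpen U) (hf : AnalyticOnNhd ℂ f U) (hy : y ∈ U)
    (i j : Fin (n + 2)) :
    pd n i (pd n j f) y = fderiv ℂ (fderiv ℂ f) y (Pi.single i 1) (Pi.single j 1) := by
  have hpd : Set.EqOn (pd n j f) (fun z => fderiv ℂ f z (Pi.single j 1)) U :=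
    fun z hz => pd_eq_fderiv (hf z hz).differentiableAt j
  have hdiff := (hf.fderiv y hy).differentiableAt
  rw [pd_congr hU hpd i hy, pd_eq_fderiv (hdiff.clm_apply (differentiableAt_const _)),
    fderiv_clm_apply hdiff (differentiableAt_const _)]
  simp

lemma pd_comm (hU : IsOpen U) (hf : AnalyticOnNhd ℂ f U) (i j : Fin (n + 2)) :
    Set.EqOn (pd n i (pd n j f)) (pd n j (pd n i f)) U := by
  intro y hy
  rw [pd_pd_eq_fderiv_fderiv hU hf hy, pd_pd_eq_fderiv_fderiv hU hf hy]
  exact (hf y hy).contDiffAt.isSymmSndFDerivAt_of_omega _ _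

lemma pd_eval (p : MvPolynomial (Fin (n + 2)) ℂ) (i : Fin (n + 2)) :
    pd n i (fun z => MvPolynomial.eval z p) =
      fun z => MvPolynomial.eval z (MvPolynomial.pderiv i p) := by
  funext y
  refine HasDerivAt.deriv ?_
  induction p using MvPolynomial.induction_on with
  | C a => simpa using hasDerivAt_const (y i) a
  | add p q hp hq => simpa using hp.fun_add hq
  | mul_X p j hp =>
    have hmul := hp.fun_mul (hasDerivAt_pi.1 (hasDerivAt_update y i (y i)) j)
    have hsingle : MvPolynomial.eval y
        ((Pi.single i 1 : Fin (n + 2) → MvPolynomial (Fin (n + 2)) ℂ) j) =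
        (Pi.single i 1 : Fin (n + 2) → ℂ) j := by
      simp only [Pi.single_apply, apply_ite (MvPolynomial.eval y), map_one, map_zero]
    simpa only [Function.update_eq_self, map_mul, MvPolynomial.eval_X, MvPolynomial.pderiv_mul,
      map_add, MvPolynomial.pderiv_X, hsingle] using hmul

end PartialDerivatives

section IteratedPartialDerivatives

variable {n : ℕ} {U : Set (Fin (n + 2) → ℂ)} {f g : (Fin (n + 2) → ℂ) → ℂ}

/-- The iterated partial derivative along a list of directions, the head being applied last. -/
noncomputable abbrev iterPd (n : ℕ) (l : List (Fin (n + 2))) (f : (Fin (n + 2) → ℂ) → ℂ) :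
    (Fin (n + 2) → ℂ) → ℂ :=
  l.foldr (pd n) f

lemma iterPd_congr (hU : IsOpen U) (h : Set.EqOn f g U) (l : List (Fin (n + 2))) :
    Set.EqOn (iterPd n l f) (iterPd n l g) U := by
  induction l with
  | nil => exact h
  | cons i l ih => exact pd_congr hU ih i

lemma analyticOnNhd_iterPd (hU : IsOpen U) (hf : AnalyticOnNhd ℂ f U)
    (l : List (Fin (n + 2))) : AnalyticOnNhd ℂ (iterPd n l f) U := by
  induction l with
  | nil => exact hf
  | cons i l ih => exact analyticOnNhd_pd hU ih i

lemma iterPd_perm (hU : IsOpen U) (hf : AnalyticOnNhd ℂ f U) {l₁ l₂ : List (Fin (n + 2))}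
    (h : l₁.Perm l₂) : Set.EqOn (iterPd n l₁ f) (iterPd n l₂ f) U := by
  induction h with
  | nil => exact Set.eqOn_refl _ _
  | cons i _ ih => exact pd_congr hU ih i
  | swap i j l => exact pd_comm hU (analyticOnNhd_iterPd hU hf l) j i
  | trans _ _ ih₁ ih₂ => exact ih₁.trans ih₂

lemma iterPd_add (hU : IsOpen U) (hf : AnalyticOnNhd ℂ f U) (hg : AnalyticOnNhd ℂ g U)
    (l : List (Fin (n + 2))) :
    Set.EqOn (iterPd n l fun z => f z + g z) (fun z => iterPd n l f z + iterPd n l g z) U := by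
  induction l with
  | nil => exact Set.eqOn_refl _ _
  | cons i l ih =>
    exact fun y hy => (pd_congr hU ih i hy).trans <|
      pd_add (analyticOnNhd_iterPd hU hf l y hy).differentiableAt
        (analyticOnNhd_iterPd hU hg l y hy).differentiableAt i

lemma iterPd_sum (hU : IsOpen U) {ι : Type*} {t : Finset ι} {F : ι → (Fin (n + 2) → ℂ) → ℂ}
    (hF : ∀ k ∈ t, AnalyticOnNhd ℂ (F k) U) (l : List (Fin (n + 2))) :
    Set.EqOn (iterPd n l fun z => ∑ k ∈ t, F k z) (fun z => ∑ k ∈ t, iterPd n l (F k) z) U := by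
  induction l with
  | nil => exact Set.eqOn_refl _ _
  | cons i l ih =>
    exact fun y hy => (pd_congr hU ih i hy).trans <|
      pd_sum (fun k hk => (analyticOnNhd_iterPd hU (hF k hk) l y hy).differentiableAt) i

lemma iterPd_eval (p : MvPolynomial (Fin (n + 2)) ℂ) (l : List (Fin (n + 2))) :
    iterPd n l (fun z => MvPolynomial.eval z p) =
      fun z => MvPolynomial.eval z (l.foldr (fun i q => MvPolynomial.pderiv i q) p) := by
  induction l with
  | nil => rfl
  | cons i l ih => exact (congrArg (pd n i) ih).trans (pd_eval _ i)

lemma coeff_foldr_pderiv_eq_zero {σ R : Type*} [CommSemiring R] {p : MvPolynomial σ R}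
    {l : List σ} {m : σ →₀ ℕ} (h : p.totalDegree < m.degree + l.length) :
    (l.foldr (fun i q => MvPolynomial.pderiv i q) p).coeff m = 0 := by
  induction l generalizing m with
  | nil => exact MvPolynomial.coeff_eq_zero_of_totalDegree_lt h
  | cons i l ih =>
    rw [List.foldr_cons, MvPolynomial.coeff_pderiv, ih, zero_mul]
    rw [map_add, Finsupp.degree_single]
    rw [List.length_cons] at h
    omega

lemma iterPd_eval_eq_zero {p : MvPolynomial (Fin (n + 2)) ℂ} {l : List (Fin (n + 2))}
    (h : p.totalDegree < l.length) : iterPd n l (fun z => MvPolynomial.eval z p) = 0 := by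
  have hzero : l.foldr (fun i q => MvPolynomial.pderiv i q) p = 0 :=
    MvPolynomial.ext _ _ fun m => coeff_foldr_pderiv_eq_zero (by omega)
  rw [iterPd_eval, hzero]
  simp only [map_zero]
  rfl

/-- The iterated partial derivative along a multiset of directions, taken in an arbitrary order:
on functions that are not smooth the value may depend on that order. -/
noncomputable def multiPd (n : ℕ) (s : Multiset (Fin (n + 2))) (f : (Fin (n + 2) → ℂ) → ℂ) :
    (Fin (n + 2) → ℂ) → ℂ :=
  iterPd n s.toList f

lemma multiPd_coe (hU : IsOpen U) (hf : AnalyticOnNhd ℂ f U) (l : List (Fin (n + 2))) :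
    Set.EqOn (multiPd n l f) (iterPd n l f) U :=
  iterPd_perm hU hf (Multiset.coe_eq_coe.1 (Multiset.coe_toList _))

lemma multiPd_cons (hU : IsOpen U) (hf : AnalyticOnNhd ℂ f U) (i : Fin (n + 2))
    (s : Multiset (Fin (n + 2))) : Set.EqOn (multiPd n (i ::ₘ s) f) (pd n i (multiPd n s f)) U := by
  have h := multiPd_coe hU hf (i :: s.toList)
  rwa [← Multiset.cons_coe, Multiset.coe_toList] at h

lemma multiPd_pd (hU : IsOpen U) (hf : AnalyticOnNhd ℂ f U) (s : Multiset (Fin (n + 2)))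
    (i : Fin (n + 2)) : Set.EqOn (multiPd n s (pd n i f)) (multiPd n (i ::ₘ s) f) U := by
  have h := multiPd_coe hU hf (s.toList ++ [i])
  rw [← Multiset.coe_add, Multiset.coe_toList, Multiset.coe_singleton, Multiset.add_comm,
    Multiset.singleton_add] at h
  intro y hy
  rw [h hy, iterPd, List.foldr_append]
  rfl

/-- No multinomial coefficients appear because `Multiset.antidiagonal` counts decompositions with
multiplicity. -/
lemma multiPd_mul (hU : IsOpen U) (hf : AnalyticOnNhd ℂ f U) (hg : AnalyticOnNhd ℂ g U)
    (s : Multiset (Fin (n + 2))) {y : Fin (n + 2) → ℂ} (hy : y ∈ U) :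
    multiPd n s (fun z => f z * g z) y =
      (s.antidiagonal.map fun p => multiPd n p.1 f y * multiPd n p.2 g y).sum := by
  induction s using Multiset.induction_on generalizing f g with
  | empty => simp [multiPd]
  | cons i s ih =>
    have hfi := analyticOnNhd_pd hU hf i
    have hgi := analyticOnNhd_pd hU hg i
    have hprod : Set.EqOn (pd n i fun z => f z * g z)
        (fun z => f z * pd n i g z + pd n i f z * g z) U := fun z hz => by
      rw [pd_mul (hf z hz).differentiableAt (hg z hz).differentiableAt, add_comm]
    rw [← multiPd_pd hU (hf.mul hg) s i hy, multiPd, iterPd_congr hU hprod _ hy,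
      iterPd_add hU (hf.mul hgi) (hfi.mul hg) _ hy, sum_map_antidiagonal_cons]
    refine congrArg₂ (· + ·) ((ih hf hgi).trans ?_) ((ih hfi hg).trans ?_)
    · simp only [multiPd_pd hU hg _ i hy]
    · simp only [multiPd_pd hU hf _ i hy]

/-- The first-order operator `∑ i, (b i + q i * y i) * ∂/∂y i` given by a vector field that is
affine and diagonal in the coordinates, such as an Euler field. -/
noncomputable def diagonalAffineOp {n : ℕ} (b q : Fin (n + 2) → ℂ) (f : (Fin (n + 2) → ℂ) → ℂ)
    (y : Fin (n + 2) → ℂ) : ℂ :=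
  ∑ i, (b i + q i * y i) * pd n i f y

lemma pd_diagonalAffineOp_add_mul (hU : IsOpen U) (hf : AnalyticOnNhd ℂ f U)
    (b q : Fin (n + 2) → ℂ) (κ : ℂ) (j : Fin (n + 2)) :
    Set.EqOn (pd n j fun z => diagonalAffineOp b q f z + κ * f z)
      (fun z => diagonalAffineOp b q (pd n j f) z + (q j + κ) * pd n j f z) U := by
  intro y hy
  have hcoord (i : Fin (n + 2)) := hasDerivAt_pi.1 (hasDerivAt_update y j (y j)) i
  have hpd (i : Fin (n + 2)) :=
    hasDerivAt_pd (analyticOnNhd_pd hU hf i y hy).differentiableAt j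
  have hderiv := ((HasDerivAt.fun_sum (u := Finset.univ) fun i _ =>
    (((hcoord i).const_mul (q i)).const_add (b i)).fun_mul (hpd i)).fun_add
      ((hasDerivAt_pd (hf y hy).differentiableAt j).const_mul κ)).deriv
  refine hderiv.trans ?_
  simp only [Function.update_eq_self, Finset.sum_add_distrib, pd_comm hU hf j _ hy,
    Pi.single_apply, mul_ite, ite_mul, mul_one, mul_zero, zero_mul, Finset.sum_ite_eq',
    Finset.mem_univ, if_true, diagonalAffineOp]
  ring

lemma iterPd_diagonalAffineOp_add_mul (hU : IsOpen U) (hf : AnalyticOnNhd ℂ f U)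
    (b q : Fin (n + 2) → ℂ) (κ : ℂ) (l : List (Fin (n + 2))) :
    Set.EqOn (iterPd n l fun z => diagonalAffineOp b q f z + κ * f z)
      (fun z => diagonalAffineOp b q (iterPd n l f) z + ((l.map q).sum + κ) * iterPd n l f z)
      U := by
  induction l with
  | nil => simp [Set.EqOn]
  | cons j l ih =>
    rw [List.map_cons, List.sum_cons, add_assoc]
    exact (pd_congr hU ih j).trans
      (pd_diagonalAffineOp_add_mul hU (analyticOnNhd_iterPd hU hf l) b q _ j)

end IteratedPartialDerivatives

namespace IsQuadricFrobeniusPotential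

variable {n : ℕ} {U : Set (Fin (n + 2) → ℂ)} {F : (Fin (n + 2) → ℂ) → ℂ}

lemma analyticOnNhd_pd_pd_pd (hF : IsQuadricFrobeniusPotential n U F) (hU : IsOpen U)
    (a b d : Fin (n + 2)) : AnalyticOnNhd ℂ (pd n a (pd n b (pd n d F))) U :=
  analyticOnNhd_iterPd hU hF.1 [a, b, d]

lemma multiPd_pd_pd_pd (hF : IsQuadricFrobeniusPotential n U F) (hU : IsOpen U)
    (s : Multiset (Fin (n + 2))) (a b d : Fin (n + 2)) :
    Set.EqOn (multiPd n s (pd n a (pd n b (pd n d F)))) (multiPd n (d ::ₘ b ::ₘ a ::ₘ s) F) U := by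
  have hd := analyticOnNhd_pd hU hF.1 d
  exact ((multiPd_pd hU (analyticOnNhd_pd hU hd b) s a).trans
    (multiPd_pd hU hd (a ::ₘ s) b)).trans (multiPd_pd hU hF.1 (b ::ₘ a ::ₘ s) d)

lemma multiPd_triple (hF : IsQuadricFrobeniusPotential n U F) (hU : IsOpen U)
    (h0 : (0 : Fin (n + 2) → ℂ) ∈ U) (i j k : Fin (n + 2)) :
    multiPd n {i, j, k} F 0 = corr3 n i j k := by
  obtain ⟨hA, -, -, -, -, -, -, hthree⟩ := hF
  exact (multiPd_coe hU hA [i, j, k] h0).trans (hthree i j k)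

lemma multiPd_cons_zero (hF : IsQuadricFrobeniusPotential n U F) (hU : IsOpen U)
    (h0 : (0 : Fin (n + 2) → ℂ) ∈ U) {s : Multiset (Fin (n + 2))} (hs : 3 ≤ s.card) :
    multiPd n (0 ::ₘ s) F 0 = 0 := by
  have hunit := hF.2.2.2.2.1
  obtain ⟨a, ha⟩ := Multiset.card_pos_iff_exists_mem.1 (by omega : 0 < s.card)
  obtain ⟨s, rfl⟩ := Multiset.exists_cons_of_mem ha
  rw [Multiset.card_cons] at hs
  obtain ⟨b, hb⟩ := Multiset.card_pos_iff_exists_mem.1 (by omega : 0 < s.card)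
  obtain ⟨s, rfl⟩ := Multiset.exists_cons_of_mem hb
  rw [Multiset.card_cons] at hs
  have hconst : Set.EqOn (pd n 0 (pd n a (pd n b F)))
      (fun y => MvPolynomial.eval y (MvPolynomial.C (gmat n a b))) U := fun y hy =>
    (hunit a b y hy).trans (MvPolynomial.eval_C _).symm
  have hperm : (0 : Fin (n + 2)) ::ₘ a ::ₘ b ::ₘ s = b ::ₘ a ::ₘ 0 ::ₘ s := by
    simp only [← Multiset.singleton_add]
    abel
  rw [hperm, ← hF.multiPd_pd_pd_pd hU s 0 a b h0, multiPd, iterPd_congr hU hconst _ h0,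
    iterPd_eval_eq_zero, Pi.zero_apply]
  rw [MvPolynomial.totalDegree_C, Multiset.length_toList]
  omega

lemma exists_diagonalAffineOp_eq_eval (hF : IsQuadricFrobeniusPotential n U F) :
    ∃ p : MvPolynomial (Fin (n + 2)) ℂ, p.totalDegree ≤ 2 ∧
      Set.EqOn (fun y => diagonalAffineOp (Pi.single 1 (n : ℂ)) (charge n) F y + -(3 - n) * F y)
        (fun y => MvPolynomial.eval y p) U := by
  obtain ⟨-, -, -, -, -, -, ⟨p, hp, heuler⟩, -⟩ := hF
  refine ⟨p, hp, fun y hy => ?_⟩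
  have hsplit : diagonalAffineOp (Pi.single 1 (n : ℂ)) (charge n) F y =
      n * pd n 1 F y + ∑ i, charge n i * y i * pd n i F y := by
    simp [diagonalAffineOp, add_mul, Finset.sum_add_distrib, Pi.single_apply]
  simp only [hsplit, ← heuler y hy, Fin.sum_univ_castSucc (n := n + 1), charge,
    Fin.castSucc_ne_last, if_false, if_true, Fin.val_castSucc]
  ring

lemma natCast_mul_multiPd_cons_one (hF : IsQuadricFrobeniusPotential n U F) (hU : IsOpen U)
    (h0 : (0 : Fin (n + 2) → ℂ) ∈ U) {s : Multiset (Fin (n + 2))} (hs : 3 ≤ s.card) :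
    n * multiPd n (1 ::ₘ s) F 0 = (3 - n - (s.map (charge n)).sum) * multiPd n s F 0 := by
  obtain ⟨p, hp, heuler⟩ := hF.exists_diagonalAffineOp_eq_eval
  have h := (iterPd_diagonalAffineOp_add_mul hU hF.1 _ _ _ s.toList h0).symm.trans
    (iterPd_congr hU heuler s.toList h0)
  rw [iterPd_eval_eq_zero (by rw [Multiset.length_toList]; omega), Pi.zero_apply] at h
  have hsum : (s.toList.map (charge n)).sum = (s.map (charge n)).sum := by
    rw [← Multiset.sum_coe, ← Multiset.map_coe, Multiset.coe_toList]
  have hop : diagonalAffineOp (Pi.single 1 (n : ℂ)) (charge n) (multiPd n s F) 0 =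
      n * multiPd n (1 ::ₘ s) F 0 := by
    rw [multiPd_cons hU hF.1 1 s h0]
    simp [diagonalAffineOp, Pi.single_apply]
  rw [← hop, ← hsum, multiPd]
  linear_combination h

lemma sum_pd_dualIndex_mul_eq (hF : IsQuadricFrobeniusPotential n U F) (a b d e : Fin (n + 2)) :
    Set.EqOn
      (fun y => ∑ i, pd n a (pd n b (pd n (dualIndex n i) F)) y * pd n i (pd n d (pd n e F)) y)
      (fun y => ∑ i, pd n a (pd n d (pd n (dualIndex n i) F)) y * pd n i (pd n b (pd n e F)) y)
      U := by
  obtain ⟨-, -, -, -, -, hwdvv, -⟩ := hF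
  intro y hy
  have h := hwdvv a b d e y hy
  rw [sum_mul_ginv_mul, sum_mul_ginv_mul] at h
  exact mul_left_cancel₀ (by norm_num) h

lemma multiPd_sum_pd_mul (hF : IsQuadricFrobeniusPotential n U F) (hU : IsOpen U)
    (h0 : (0 : Fin (n + 2) → ℂ) ∈ U) (s : Multiset (Fin (n + 2))) (a b d e : Fin (n + 2)) :
    multiPd n s (fun y => ∑ i,
        pd n a (pd n b (pd n (dualIndex n i) F)) y * pd n i (pd n d (pd n e F)) y) 0 =
      (s.antidiagonal.map fun p =>
        contraction (fun t => multiPd n t F 0) (a ::ₘ b ::ₘ p.1) (d ::ₘ e ::ₘ p.2)).sum := by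
  have hA := hF.analyticOnNhd_pd_pd_pd hU
  rw [multiPd, iterPd_sum hU (fun i _ => (hA _ _ _).mul (hA _ _ _)) _ h0]
  refine (Finset.sum_congr rfl fun i _ => multiPd_mul hU (hA _ _ _) (hA _ _ _) s h0).trans ?_
  refine (Multiset.sum_map_sum_map Finset.univ.val _).trans ?_
  refine congrArg Multiset.sum (Multiset.map_congr rfl fun p _ =>
    Finset.sum_congr rfl fun i _ => ?_)
  have hperm : e ::ₘ d ::ₘ i ::ₘ p.2 = i ::ₘ d ::ₘ e ::ₘ p.2 := by
    simp only [← Multiset.singleton_add]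
    abel
  rw [hF.multiPd_pd_pd_pd hU _ _ _ _ h0, hF.multiPd_pd_pd_pd hU _ _ _ _ h0, hperm,
    Multiset.cons_swap b a]

theorem isQuadricCorrelator (hF : IsQuadricFrobeniusPotential n U F) (hU : IsOpen U)
    (h0 : (0 : Fin (n + 2) → ℂ) ∈ U) : IsQuadricCorrelator n fun s => multiPd n s F 0 where
  three := hF.multiPd_triple hU h0
  unit _ := hF.multiPd_cons_zero hU h0
  euler _ := hF.natCast_mul_multiPd_cons_one hU h0
  wdvv a b d e s := by
    rw [← hF.multiPd_sum_pd_mul hU h0, ← hF.multiPd_sum_pd_mul hU h0]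
    exact iterPd_congr hU (hF.sum_pd_dualIndex_mul_eq a b d e) _ h0

end IsQuadricFrobeniusPotential

theorem odd_broad_correlators_vanish_general {n : ℕ} (hn : 2 ≤ n)
    {U : Set (Fin (n + 2) → ℂ)} (hU : IsOpen U) (h0 : (0 : Fin (n + 2) → ℂ) ∈ U)
    {F : (Fin (n + 2) → ℂ) → ℂ} (hF : IsQuadricFrobeniusPotential n U F)
    {l : List (Fin (n + 2))} (hl : 3 ≤ l.length)
    (hodd : Odd (l.count (Fin.last (n + 1)))) :
    (l.foldr (fun i G => pd n i G) F) 0 = 0 := by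
  refine (multiPd_coe hU hF.1 l h0).symm.trans
    ((hF.isQuadricCorrelator hU h0).eq_zero_of_odd hn ?_ ?_)
  · rwa [Multiset.coe_card]
  · rwa [broadCount, Multiset.coe_count]

/-- **Vanishing of correlators with an odd number of broad insertions**
(Lemma 6.9). Let `n ≥ 4` be even and let `F` be a potential of the Frobenius manifold
mirror to `Qⁿ` on an open neighborhood `U` of `0`. Then every iterated partial derivative
of `F` at `0` of order `m ≥ 3` in which the index `n+1` (the broad direction) occurs an odd
number of times vanishes. -/
theorem odd_broad_correlators_vanish (n : ℕ) (hn : 4 ≤ n) (hev : Even n)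
    (U : Set (Fin (n + 2) → ℂ)) (hU : IsOpen U) (h0 : (0 : Fin (n + 2) → ℂ) ∈ U)
    (F : (Fin (n + 2) → ℂ) → ℂ) (hF : IsQuadricFrobeniusPotential n U F)
    (l : List (Fin (n + 2))) (hl : 3 ≤ l.length)
    (hodd : Odd (l.count (Fin.last (n + 1)))) :
    (l.foldr (fun i G => pd n i G) F) 0 = 0 :=
  odd_broad_correlators_vanish_general (by omega) hU h0 hF hl hodd
end

section
/- Let n ≥ 4 be an even integer, and let g, U be as follows: g is the symmetric (n+2)×(n+2) matrix with (indices 0,…,n+1) g_{ij} = 2 if 0 ≤ i,j ≤ n and i+j = n, g_{n+1,n+1} = 2, g_{ij} = 0 otherwise, and U is an open neighborhood of 0 in ℂ^{n+2}. Suppose F and F′ are two ℂ-analytic functions on U, each satisfying all of the following: (a) vanishing value and vanishing first and second partial derivatives at 0; (b) ∂_{y_0}∂_{y_a}∂_{y_b}(·) = g_{ab} identically for all a,b; (c) the WDVV equations Σ_{i,j} (∂_a∂_b∂_i(·)) g^{ij} (∂_j∂_c∂_d(·)) = Σ_{i,j} (∂_a∂_c∂_i(·)) g^{ij} (∂_j∂_b∂_d(·))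 for all a,b,c,d; (d) n ∂_{y_1}(·) + Σ_{i=0}^{n}(1−i) y_i ∂_{y_i}(·) + (1 − n/2) y_{n+1} ∂_{y_{n+1}}(·) − (3−n)(·) equals a polynomial of total degree ≤ 2; (e) the same prescribed third partial derivatives at 0: ∂_{n+1}∂_{n+1}∂_0(·)(0) = 2, ∂_{n+1}∂_{n+1}∂_n(·)(0) = −4, ∂_i∂_j∂_k(·)(0) = 2 when i+j+k = n (0 ≤ i,j,k ≤ n), ∂_i∂_{n−i}∂_n(·)(0) = 4 for 1 ≤ i ≤ n−1, ∂_i∂_j∂_k(·)(0) = 8 when i+j+k = 2n with 0 ≤ i,j,k ≤ n and i,j,k ≠ n, ∂_n∂_n∂_n(·)(0) = 8, all other third derivatives at 0 vanishing. Then F = F′ on some neighborhood of 0. -/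
open Finset

/-!
Let `D` be the difference of two potentials, and look at its Taylor coefficients of lowest order
`m` at the origin; `m ≥ 4` because the third derivatives are prescribed. To leading order the WDVV
equations are linear in `D`, with coefficients the known third derivatives. The flat identity kills
every order-`m` derivative of `D` along `∂₀`, the Euler field every one along `∂₁`, and WDVV for
`(a, b, 1, d)` those along `∂_{d+1}` once those along `∂_d` are gone, since quantum multiplication
by `∂₁` at the origin takes `∂_d` to `∂_{d+1}` modulo `∂₀`.

There remains the derivative `C = ∂_{n+1}^m D(0)`, with `m = k + 3`. Differentiating WDVV for
`(n+1, 1, n+1, n)` in the direction `∂_{n+1}` once more than the leading order requires relates `C`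
to `E = ∂₁ ∂_{n+1}^m D(0)` by `2 E = (k + 1) C`, where the fourth derivative
`∂_{n+1} ∂_{n+1} ∂₁ ∂ₙ F(0) = -4` enters. The Euler field gives `n E = (n (k + 1) / 2 - k) C`, so
`k C = 0`.
-/

section FrameDerivatives

variable {𝕜 E F ι : Type*} [NontriviallyNormedField 𝕜] [NormedAddCommGroup E] [NormedSpace 𝕜 E]
  [NormedAddCommGroup F] [NormedSpace 𝕜 F] {v : ι → E} {f g : E → F} {x : E}

variable (𝕜) in
/-- The iterated directional derivative `∂_{v i₁} ∂_{v i₂} ⋯ ∂_{v iₘ} f` along the vectors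
`v i` labelled by the list `[i₁, i₂, …, iₘ]`; the last label is differentiated first. -/
noncomputable def frameDeriv (v : ι → E) : List ι → (E → F) → E → F
  | [], f => f
  | i :: L, f => fun x => fderiv 𝕜 (frameDeriv v L f) x (v i)

lemma frameDeriv_cons_apply (i : ι) (L : List ι) (f : E → F) (x : E) :
    frameDeriv 𝕜 v (i :: L) f x = fderiv 𝕜 (frameDeriv 𝕜 v L f) x (v i) :=
  rfl

lemma frameDeriv_append (L L' : List ι) (f : E → F) :
    frameDeriv 𝕜 v (L ++ L') f = frameDeriv 𝕜 v L (frameDeriv 𝕜 v L' f) := by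
  induction L with
  | nil => rfl
  | cons i L ih => rw [List.cons_append, frameDeriv, frameDeriv, ih]

lemma frameDeriv_zero_fun (L : List ι) : frameDeriv 𝕜 v L (0 : E → F) = 0 := by
  induction L with
  | nil => rfl
  | cons i L ih => funext x; simp [frameDeriv_cons_apply, ih]

lemma frameDeriv_congr (L : List ι) (h : f =ᶠ[nhds x] g) :
    frameDeriv 𝕜 v L f =ᶠ[nhds x] frameDeriv 𝕜 v L g := by
  induction L with
  | nil => exact h
  | cons i L ih =>
    exact ih.fderiv.mono fun y hy => by rw [frameDeriv_cons_apply, frameDeriv_cons_apply, hy]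

variable (𝕜) in
/-- All derivatives of `f` of order less than `m` along the frame `v` vanish at `x`. -/
def VanishesToOrder (v : ι → E) (m : ℕ) (f : E → F) (x : E) : Prop :=
  ∀ L : List ι, L.length < m → frameDeriv 𝕜 v L f x = 0

lemma VanishesToOrder.mono {m k : ℕ} (hf : VanishesToOrder 𝕜 v m f x) (hkm : k ≤ m) :
    VanishesToOrder 𝕜 v k f x :=
  fun L hL => hf L (hL.trans_le hkm)

lemma VanishesToOrder.frameDeriv {m k : ℕ} {S : List ι} (hf : VanishesToOrder 𝕜 v m f x)
    (hkm : k ≤ m - S.length) : VanishesToOrder 𝕜 v k (frameDeriv 𝕜 v S f) x := fun L hL => by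
  rw [← frameDeriv_append]
  exact hf _ (by rw [List.length_append]; omega)

variable (𝕜) in
/-- All derivatives of `f` of order `m` along the frame `v` that involve the direction `v e` vanish
at `x`. -/
def VanishesAlong (v : ι → E) (m : ℕ) (f : E → F) (x : E) (e : ι) : Prop :=
  ∀ L : List ι, L.length = m → e ∈ L → frameDeriv 𝕜 v L f x = 0

section Complete

variable [CompleteSpace F]

lemma analyticAt_frameDeriv (L : List ι) (hf : AnalyticAt 𝕜 f x) :
    AnalyticAt 𝕜 (frameDeriv 𝕜 v L f) x := by
  induction L with
  | nil => exact hf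
  | cons i L ih => exact ((ContinuousLinearMap.apply 𝕜 F (v i)).analyticAt _).comp ih.fderiv

lemma frameDeriv_ofFn {m : ℕ} (l : Fin m → ι) (hf : AnalyticAt 𝕜 f x) :
    frameDeriv 𝕜 v (List.ofFn l) f x = iteratedFDeriv 𝕜 m f x fun k => v (l k) := by
  induction m generalizing x with
  | zero => rw [List.ofFn_zero, iteratedFDeriv_zero_apply, frameDeriv]
  | succ m ih =>
    have htail : frameDeriv 𝕜 v (List.ofFn fun k => l k.succ) f =ᶠ[nhds x]
        fun y => iteratedFDeriv 𝕜 m f y fun k => v (l k.succ) :=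
      hf.eventually_analyticAt.mono fun y hy => ih _ hy
    rw [List.ofFn_succ, frameDeriv_cons_apply, htail.fderiv_eq,
      fderiv_continuousMultilinear_apply_const_apply
        (hf.contDiffAt.differentiableAt_iteratedFDeriv (WithTop.coe_lt_top _))]
    rfl

lemma frameDeriv_eq_iteratedFDeriv (L : List ι) (hf : AnalyticAt 𝕜 f x) :
    frameDeriv 𝕜 v L f x = iteratedFDeriv 𝕜 L.length f x fun k => v (L.get k) := by
  conv_lhs => rw [← List.ofFn_get L]
  exact frameDeriv_ofFn L.get hf

lemma frameDeriv_add (L : List ι) (hf : AnalyticAt 𝕜 f x) (hg : AnalyticAt 𝕜 g x) :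
    frameDeriv 𝕜 v L (fun y => f y + g y) x = frameDeriv 𝕜 v L f x + frameDeriv 𝕜 v L g x := by
  rw [frameDeriv_eq_iteratedFDeriv L hf, frameDeriv_eq_iteratedFDeriv L hg,
    frameDeriv_eq_iteratedFDeriv L (hf.fun_add hg),
    fun_iteratedFDeriv_add_apply hf.contDiffAt hg.contDiffAt, add_apply]

lemma frameDeriv_sub (L : List ι) (hf : AnalyticAt 𝕜 f x) (hg : AnalyticAt 𝕜 g x) :
    frameDeriv 𝕜 v L (f - g) x = frameDeriv 𝕜 v L f x - frameDeriv 𝕜 v L g x := by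
  rw [frameDeriv_eq_iteratedFDeriv L hf, frameDeriv_eq_iteratedFDeriv L hg,
    frameDeriv_eq_iteratedFDeriv L (hf.sub hg),
    iteratedFDeriv_sub_apply hf.contDiffAt hg.contDiffAt, sub_apply]

lemma frameDeriv_sum {κ : Type*} {s : Finset κ} {φ : κ → E → F} (L : List ι)
    (hφ : ∀ k, AnalyticAt 𝕜 (φ k) x) :
    frameDeriv 𝕜 v L (fun y => ∑ k ∈ s, φ k y) x = ∑ k ∈ s, frameDeriv 𝕜 v L (φ k) x := by
  rw [frameDeriv_eq_iteratedFDeriv L (Finset.analyticAt_fun_sum s fun k _ => hφ k),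
    iteratedFDeriv_fun_sum_apply fun k _ => (hφ k).contDiffAt, _root_.sum_apply]
  exact Finset.sum_congr rfl fun k _ => (frameDeriv_eq_iteratedFDeriv L (hφ k)).symm

lemma frameDeriv_const_smul (L : List ι) (c : 𝕜) (hf : AnalyticAt 𝕜 f x) :
    frameDeriv 𝕜 v L (fun y => c • f y) x = c • frameDeriv 𝕜 v L f x := by
  rw [frameDeriv_eq_iteratedFDeriv L hf, frameDeriv_eq_iteratedFDeriv L hf.fun_const_smul,
    iteratedFDeriv_const_smul_apply' hf.contDiffAt, smul_apply]

lemma fderiv_fderiv_apply_comm (hf : AnalyticAt 𝕜 f x) (u w : E) :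
    fderiv 𝕜 (fderiv 𝕜 f) x u w = fderiv 𝕜 (fderiv 𝕜 f) x w u :=
  hf.contDiffAt.isSymmSndFDerivAt_of_omega u w

lemma fderiv_fderiv_apply (hf : AnalyticAt 𝕜 f x) (u w : E) :
    fderiv 𝕜 (fun y => fderiv 𝕜 f y u) x w = fderiv 𝕜 (fderiv 𝕜 f) x w u := by
  rw [fderiv_clm_apply hf.fderiv.differentiableAt (differentiableAt_const u)]
  simp

lemma frameDeriv_perm {L L' : List ι} (h : L.Perm L') (hf : AnalyticAt 𝕜 f x) :
    frameDeriv 𝕜 v L f x = frameDeriv 𝕜 v L' f x := by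
  induction h generalizing x with
  | nil => rfl
  | cons i _ ih =>
    rw [frameDeriv_cons_apply, frameDeriv_cons_apply,
      Filter.EventuallyEq.fderiv_eq (hf.eventually_analyticAt.mono fun y hy => ih hy)]
  | swap i j L =>
    have hL := analyticAt_frameDeriv (v := v) L hf
    have hcons (i j : ι) : frameDeriv 𝕜 v (j :: i :: L) f x =
        fderiv 𝕜 (fderiv 𝕜 (frameDeriv 𝕜 v L f)) x (v j) (v i) := fderiv_fderiv_apply hL _ _
    rw [hcons, hcons, fderiv_fderiv_apply_comm hL]
  | trans _ _ ih ih' => exact (ih hf).trans (ih' hf)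

lemma vanishesAlong_of_cons {m : ℕ} {e : ι} (hf : AnalyticAt 𝕜 f x)
    (h : ∀ L : List ι, L.length + 1 = m → frameDeriv 𝕜 v (e :: L) f x = 0) :
    VanishesAlong 𝕜 v m f x e := by
  classical
  intro L hL he
  rw [frameDeriv_perm (List.perm_cons_erase he) hf]
  exact h _ (by rw [List.length_erase_add_one he, hL])

lemma frameDeriv_comm (L L' : List ι) (hf : AnalyticAt 𝕜 f x) :
    frameDeriv 𝕜 v L (frameDeriv 𝕜 v L' f) x = frameDeriv 𝕜 v L' (frameDeriv 𝕜 v L f) x := by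
  rw [← frameDeriv_append, ← frameDeriv_append, frameDeriv_perm List.perm_append_comm hf]

theorem eventuallyEq_zero_of_iteratedFDeriv_eq_zero [CharZero 𝕜] (hf : AnalyticAt 𝕜 f x)
    (h : ∀ m, iteratedFDeriv 𝕜 m f x = 0) : f =ᶠ[nhds x] 0 := by
  obtain ⟨p, r, hp⟩ := hf
  filter_upwards [Metric.eball_mem_nhds x hp.r_pos] with y hy
  have hsum := hp.hasSum_iteratedFDeriv (y := y - x) (by simpa [edist_eq_enorm_sub] using hy)
  simp only [h, add_sub_cancel, zero_apply, smul_zero] at hsum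
  exact hsum.unique hasSum_zero

theorem eventuallyEq_zero_of_frameDeriv_eq_zero [CharZero 𝕜] (b : Module.Basis ι 𝕜 E)
    (hf : AnalyticAt 𝕜 f x) (h : ∀ L, frameDeriv 𝕜 b L f x = 0) : f =ᶠ[nhds x] 0 := by
  refine eventuallyEq_zero_of_iteratedFDeriv_eq_zero hf fun m => ?_
  apply ContinuousMultilinearMap.toMultilinearMap_injective
  refine Module.Basis.ext_multilinear (fun _ => b) fun l => ?_
  exact (frameDeriv_ofFn l hf).symm.trans (h _)

theorem frameDeriv_fderiv_affine {w : ι → 𝕜} (A : E →L[𝕜] E) (hA : ∀ i, A (v i) = w i • v i)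
    (u : E) (L : List ι) (hf : AnalyticAt 𝕜 f x) :
    frameDeriv 𝕜 v L (fun y => fderiv 𝕜 f y (u + A y)) x =
      fderiv 𝕜 (frameDeriv 𝕜 v L f) x (u + A x) + (L.map w).sum • frameDeriv 𝕜 v L f x := by
  induction L generalizing x with
  | nil => simp only [frameDeriv, List.map_nil, List.sum_nil, zero_smul, add_zero]
  | cons i L ih =>
    set h := frameDeriv 𝕜 v L f
    have hh : AnalyticAt 𝕜 h x := analyticAt_frameDeriv L hf
    have haffine : HasFDerivAt (fun y => u + A y) A x := A.hasFDerivAt.const_add u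
    have hcommute : frameDeriv 𝕜 v L (fun y => fderiv 𝕜 f y (u + A y)) =ᶠ[nhds x]
        fun y => fderiv 𝕜 h y (u + A y) + (L.map w).sum • h y :=
      hf.eventually_analyticAt.mono fun y hy => ih hy
    have hderiv := (hh.fderiv.differentiableAt.hasFDerivAt.clm_apply haffine).fun_add
      (hh.differentiableAt.hasFDerivAt.fun_const_smul (L.map w).sum)
    rw [frameDeriv_cons_apply, hcommute.fderiv_eq, hderiv.fderiv, List.map_cons, List.sum_cons,
      add_smul]
    have hcons : fderiv 𝕜 (frameDeriv 𝕜 v (i :: L) f) x (u + A x) =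
        fderiv 𝕜 (fderiv 𝕜 h) x (v i) (u + A x) := by
      rw [← fderiv_fderiv_apply_comm hh]
      exact fderiv_fderiv_apply hh _ _
    rw [hcons, frameDeriv_cons_apply]
    simp only [hA, map_smul, add_apply, ContinuousLinearMap.flip_apply,
      ContinuousLinearMap.comp_apply, smul_apply]
    abel

theorem fderiv_frameDeriv_zero_of_euler {w : ι → 𝕜} {κ : 𝕜} {A : E →L[𝕜] E} {u : E} {q : E → F}
    (hA : ∀ i, A (v i) = w i • v i) (hf : AnalyticAt 𝕜 f 0)
    (heuler : (fun y => fderiv 𝕜 f y (u + A y)) =ᶠ[nhds 0] fun y => κ • f y + q y)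
    (hq : AnalyticAt 𝕜 q 0) {L : List ι} (hqL : frameDeriv 𝕜 v L q 0 = 0) :
    fderiv 𝕜 (frameDeriv 𝕜 v L f) 0 u = (κ - (L.map w).sum) • frameDeriv 𝕜 v L f 0 := by
  have h := (frameDeriv_congr (𝕜 := 𝕜) (v := v) L heuler).self_of_nhds
  rw [frameDeriv_fderiv_affine A hA u L hf, frameDeriv_add L (hf.fun_const_smul (c := κ)) hq,
    frameDeriv_const_smul L κ hf, hqL, add_zero, map_zero, add_zero] at h
  rw [sub_smul, ← h, add_sub_cancel_right]

end Complete

section Product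

variable [CompleteSpace 𝕜] {φ ψ : E → 𝕜} {S : List ι}

lemma frameDeriv_singleton_mul (i : ι) (hφ : AnalyticAt 𝕜 φ x) (hψ : AnalyticAt 𝕜 ψ x) :
    frameDeriv 𝕜 v [i] (φ * ψ) =ᶠ[nhds x]
      fun y => frameDeriv 𝕜 v [i] φ y * ψ y + φ y * frameDeriv 𝕜 v [i] ψ y := by
  filter_upwards [hφ.eventually_analyticAt, hψ.eventually_analyticAt] with y hφy hψy
  simp only [frameDeriv]
  rw [fderiv_mul hφy.differentiableAt hψy.differentiableAt]
  simp only [add_apply, smul_apply, smul_eq_mul]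
  ring

lemma frameDeriv_cons_mul (i : ι) (L : List ι) (hφ : AnalyticAt 𝕜 φ x) (hψ : AnalyticAt 𝕜 ψ x) :
    frameDeriv 𝕜 v (i :: L) (φ * ψ) x =
      frameDeriv 𝕜 v L (frameDeriv 𝕜 v [i] φ * ψ) x +
        frameDeriv 𝕜 v L (φ * frameDeriv 𝕜 v [i] ψ) x := by
  rw [← List.singleton_append, frameDeriv_append, frameDeriv_comm _ _ (hφ.mul hψ),
    (frameDeriv_congr L (frameDeriv_singleton_mul i hφ hψ)).self_of_nhds]
  exact frameDeriv_add L ((analyticAt_frameDeriv _ hφ).mul hψ)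
    (hφ.mul (analyticAt_frameDeriv _ hψ))

lemma frameDeriv_mul_of_vanishesToOrder (hφ : AnalyticAt 𝕜 φ x) (hψ : AnalyticAt 𝕜 ψ x)
    (hvan : VanishesToOrder 𝕜 v S.length φ x) :
    frameDeriv 𝕜 v S (φ * ψ) x = frameDeriv 𝕜 v S φ x * ψ x := by
  induction S generalizing φ ψ with
  | nil => rfl
  | cons i S ih =>
    rw [frameDeriv_cons_mul i S hφ hψ,
      ih (analyticAt_frameDeriv _ hφ) hψ (hvan.frameDeriv (by simp)),
      ih hφ (analyticAt_frameDeriv _ hψ) fun L hL => hvan L (hL.trans (Nat.lt_succ_self _)),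
      hvan S (Nat.lt_succ_self _), zero_mul, add_zero, frameDeriv_comm _ _ hφ]
    rfl

theorem frameDeriv_mul_of_vanishesToOrder_pred {m : ℕ} (hφ : AnalyticAt 𝕜 φ x)
    (hψ : AnalyticAt 𝕜 ψ x) (hS : S.length ≤ m + 1) (hvan : VanishesToOrder 𝕜 v m φ x) :
    frameDeriv 𝕜 v S (φ * ψ) x = frameDeriv 𝕜 v S φ x * ψ x +
      ∑ k : Fin S.length, frameDeriv 𝕜 v (S.eraseIdx k) φ x * frameDeriv 𝕜 v [S.get k] ψ x := by
  induction S generalizing φ m with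
  | nil => simp [frameDeriv]
  | cons i S ih =>
    rw [List.length_cons, Nat.add_le_add_iff_right] at hS
    have hcons (L : List ι) :
        frameDeriv 𝕜 v L (frameDeriv 𝕜 v [i] φ) x = frameDeriv 𝕜 v (i :: L) φ x :=
      frameDeriv_comm L [i] hφ
    have hφi : frameDeriv 𝕜 v S (frameDeriv 𝕜 v [i] φ * ψ) x = frameDeriv 𝕜 v (i :: S) φ x * ψ x +
        ∑ k : Fin S.length,
          frameDeriv 𝕜 v (i :: S.eraseIdx k) φ x * frameDeriv 𝕜 v [S.get k] ψ x := by
      simp only [ih (m := m - 1) (analyticAt_frameDeriv [i] hφ) (by omega)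
        (hvan.frameDeriv le_rfl), hcons]
    have hψi : frameDeriv 𝕜 v S (φ * frameDeriv 𝕜 v [i] ψ) x =
        frameDeriv 𝕜 v S φ x * frameDeriv 𝕜 v [i] ψ x :=
      frameDeriv_mul_of_vanishesToOrder hφ (analyticAt_frameDeriv [i] hψ) (hvan.mono hS)
    have hsum : ∑ k : Fin (i :: S).length, frameDeriv 𝕜 v ((i :: S).eraseIdx k) φ x *
          frameDeriv 𝕜 v [(i :: S).get k] ψ x =
        frameDeriv 𝕜 v S φ x * frameDeriv 𝕜 v [i] ψ x + ∑ k : Fin S.length,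
          frameDeriv 𝕜 v (i :: S.eraseIdx k) φ x * frameDeriv 𝕜 v [S.get k] ψ x :=
      Fin.sum_univ_succ _
    rw [frameDeriv_cons_mul i S hφ hψ, hφi, hψi, hsum]
    ring

end Product

section GradPairing

variable [Fintype ι] {η : ι → ι → 𝕜} {φ φ' ψ : E → 𝕜} {S : List ι}

/-- The pairing `⟨dφ, dψ⟩ = ∑ ∂_{v i} φ · η^{ij} · ∂_{v j} ψ` of the differentials of two functions,
for the bilinear form on covectors with matrix `η` in the frame `v`. The WDVV equations say that
`⟨d(∂ₐ∂_b F), d(∂_c∂_d F)⟩` is symmetric in `b` and `c`. -/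
noncomputable def gradPairing (v : ι → E) (η : ι → ι → 𝕜) (φ ψ : E → 𝕜) (x : E) : 𝕜 :=
  ∑ i, ∑ j, frameDeriv 𝕜 v [i] φ x * η i j * frameDeriv 𝕜 v [j] ψ x

lemma gradPairing_comm (hη : ∀ i j, η i j = η j i) :
    gradPairing v η φ ψ = gradPairing v η ψ φ := by
  funext x
  unfold gradPairing
  rw [Finset.sum_comm]
  exact Finset.sum_congr rfl fun j _ => Finset.sum_congr rfl fun i _ => by rw [hη i j]; ring

lemma gradPairing_eq_zero (h : ∀ i, frameDeriv 𝕜 v [i] φ x = 0) : gradPairing v η φ ψ x = 0 := by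
  simp only [gradPairing, h, zero_mul, Finset.sum_const_zero]

variable [CompleteSpace 𝕜]

lemma gradPairing_frameDeriv_sub (L : List ι) (hφ : AnalyticAt 𝕜 φ x) (hφ' : AnalyticAt 𝕜 φ' x) :
    gradPairing v η (frameDeriv 𝕜 v L (φ - φ')) ψ x =
      gradPairing v η (frameDeriv 𝕜 v L φ) ψ x - gradPairing v η (frameDeriv 𝕜 v L φ') ψ x := by
  simp only [gradPairing, ← frameDeriv_append, frameDeriv_sub _ hφ hφ', sub_mul,
    Finset.sum_sub_distrib]

lemma analyticAt_gradPairing (hφ : AnalyticAt 𝕜 φ x) (hψ : AnalyticAt 𝕜 ψ x) :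
    AnalyticAt 𝕜 (gradPairing v η φ ψ) x :=
  Finset.analyticAt_fun_sum _ fun i _ => Finset.analyticAt_fun_sum _ fun j _ =>
    ((analyticAt_frameDeriv [i] hφ).mul analyticAt_const).mul (analyticAt_frameDeriv [j] hψ)

theorem frameDeriv_gradPairing_of_vanishesToOrder_pred (hφ : AnalyticAt 𝕜 φ x)
    (hψ : AnalyticAt 𝕜 ψ x) (hvan : VanishesToOrder 𝕜 v S.length φ x) :
    frameDeriv 𝕜 v S (gradPairing v η φ ψ) x = gradPairing v η (frameDeriv 𝕜 v S φ) ψ x +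
      ∑ k : Fin S.length, gradPairing v η (frameDeriv 𝕜 v (S.eraseIdx k) φ)
        (frameDeriv 𝕜 v [S.get k] ψ) x := by
  have hterm (i j : ι) : frameDeriv 𝕜 v S
        (fun y => frameDeriv 𝕜 v [i] φ y * η i j * frameDeriv 𝕜 v [j] ψ y) x =
      frameDeriv 𝕜 v [i] (frameDeriv 𝕜 v S φ) x * η i j * frameDeriv 𝕜 v [j] ψ x +
        ∑ k : Fin S.length, frameDeriv 𝕜 v [i] (frameDeriv 𝕜 v (S.eraseIdx k) φ) x * η i j *
          frameDeriv 𝕜 v [j] (frameDeriv 𝕜 v [S.get k] ψ) x := by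
    have hηψ : AnalyticAt 𝕜 (fun y => η i j • frameDeriv 𝕜 v [j] ψ y) x :=
      (analyticAt_frameDeriv [j] hψ).fun_const_smul
    simp only [mul_assoc, ← smul_eq_mul (η i j)]
    refine (frameDeriv_mul_of_vanishesToOrder_pred (m := S.length - 1)
      (analyticAt_frameDeriv [i] hφ) hηψ (by omega) (hvan.frameDeriv le_rfl)).trans ?_
    simp only [frameDeriv_comm _ [i] hφ, frameDeriv_const_smul _ _ (analyticAt_frameDeriv [j] hψ),
      frameDeriv_comm _ [j] hψ]
  have hterm_analytic (i j : ι) : AnalyticAt 𝕜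
      (fun y => frameDeriv 𝕜 v [i] φ y * η i j * frameDeriv 𝕜 v [j] ψ y) x :=
    ((analyticAt_frameDeriv [i] hφ).mul analyticAt_const).mul (analyticAt_frameDeriv [j] hψ)
  unfold gradPairing
  rw [frameDeriv_sum S fun i => Finset.analyticAt_fun_sum _ fun j _ => hterm_analytic i j]
  simp only [frameDeriv_sum S fun j => hterm_analytic _ j, hterm, Finset.sum_add_distrib]
  congr 1
  exact Finset.sum_comm_cycle

lemma frameDeriv_gradPairing_of_vanishesToOrder (hφ : AnalyticAt 𝕜 φ x) (hψ : AnalyticAt 𝕜 ψ x)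
    (hvan : VanishesToOrder 𝕜 v (S.length + 1) φ x) :
    frameDeriv 𝕜 v S (gradPairing v η φ ψ) x = gradPairing v η (frameDeriv 𝕜 v S φ) ψ x := by
  have hzero (k : Fin S.length) (i : ι) :
      frameDeriv 𝕜 v [i] (frameDeriv 𝕜 v (S.eraseIdx k) φ) x = 0 :=
    hvan (i :: S.eraseIdx k) (by rw [List.length_cons, List.length_eraseIdx]; split <;> omega)
  rw [frameDeriv_gradPairing_of_vanishesToOrder_pred hφ hψ (hvan.mono (Nat.le_succ _))]
  simp only [gradPairing, hzero, zero_mul, Finset.sum_const_zero, add_zero]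

theorem frameDeriv_gradPairing_of_vanishesAlong {L : List ι} {e : ι} (he : e ∈ L)
    (hφ : AnalyticAt 𝕜 φ x) (hψ : AnalyticAt 𝕜 ψ x)
    (hvan : VanishesToOrder 𝕜 v (S.length + L.length) φ x)
    (hvan_e : VanishesAlong 𝕜 v (S.length + L.length) φ x e) :
    frameDeriv 𝕜 v S (gradPairing v η (frameDeriv 𝕜 v L φ) ψ) x =
      gradPairing v η (frameDeriv 𝕜 v (S ++ L) φ) ψ x := by
  have hsubleading (k : Fin S.length) : gradPairing v η
      (frameDeriv 𝕜 v (S.eraseIdx k) (frameDeriv 𝕜 v L φ)) (frameDeriv 𝕜 v [S.get k] ψ) x = 0 := by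
    refine gradPairing_eq_zero fun i => ?_
    rw [← frameDeriv_append, ← frameDeriv_append]
    refine hvan_e _ ?_ (by simp only [List.mem_append, he, or_true])
    have := List.length_eraseIdx_add_one k.2
    simp only [List.length_append, List.length_singleton]
    omega
  rw [frameDeriv_gradPairing_of_vanishesToOrder_pred (analyticAt_frameDeriv L hφ) hψ
    (hvan.frameDeriv (by omega)), Finset.sum_eq_zero fun k _ => hsubleading k, add_zero,
    frameDeriv_append]

end GradPairing

end FrameDerivatives

section Polynomial

open MvPolynomial

lemma totalDegree_pderiv_lt {σ R : Type*} [CommSemiring R] {p : MvPolynomial σ R} {i : σ}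
    (h : pderiv i p ≠ 0) : (pderiv i p).totalDegree < p.totalDegree := by
  obtain ⟨m, hm, hdeg⟩ :=
    Finset.exists_mem_eq_sup _ (support_nonempty.2 h) fun m => m.sum fun _ e => e
  rw [mem_support_iff, coeff_pderiv] at hm
  have hle := le_totalDegree (mem_support_iff.2 (left_ne_zero_of_mul hm))
  rw [Finsupp.sum_add_index' (fun _ => rfl) fun _ _ _ => rfl, Finsupp.sum_single_index rfl] at hle
  rw [totalDegree, hdeg]
  exact hle

lemma foldr_pderiv_eq_zero {σ R : Type*} [CommSemiring R] {p : MvPolynomial σ R} {L : List σ}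
    (h : p.totalDegree < L.length) : L.foldr (fun i q => pderiv i q) p = 0 := by
  suffices H : L.foldr (fun i q => pderiv i q) p = 0 ∨
      (L.foldr (fun i q => pderiv i q) p).totalDegree + L.length ≤ p.totalDegree by
    exact H.resolve_right (by omega)
  clear h
  induction L with
  | nil => exact Or.inr le_rfl
  | cons i L ih =>
    rw [List.foldr_cons, or_iff_not_imp_left]
    intro hne
    have := totalDegree_pderiv_lt hne
    rcases ih with hzero | hdeg
    · rw [hzero, map_zero] at hne
      exact absurd rfl hne
    · rw [List.length_cons]
      omega

variable {𝕜 σ : Type*} [NontriviallyNormedField 𝕜] [Fintype σ]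

lemma analyticAt_eval (p : MvPolynomial σ 𝕜) (y : σ → 𝕜) :
    AnalyticAt 𝕜 (fun y => eval y p) y :=
  AnalyticAt.aeval_mvPolynomial (f := fun y : σ → 𝕜 => y) (fun i =>
    (ContinuousLinearMap.proj (R := 𝕜) (φ := fun _ => 𝕜) i).analyticAt y) p

lemma fderiv_eval_apply_basisFun {σ : Type*} [Finite σ] (p : MvPolynomial σ 𝕜) (y : σ → 𝕜)
    (i : σ) :
    fderiv 𝕜 (fun y => eval y p) y (Pi.basisFun 𝕜 σ i) = eval y (pderiv i p) := by
  classical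
  cases nonempty_fintype σ
  have hdiff (p : MvPolynomial σ 𝕜) : DifferentiableAt 𝕜 (fun y => eval y p) y :=
    (analyticAt_eval p y).differentiableAt
  induction p using MvPolynomial.induction_on with
  | C c => simp only [eval_C, fderiv_fun_const, Pi.zero_apply, zero_apply, pderiv_C, map_zero]
  | add p q hp hq =>
    simp only [map_add]
    rw [fderiv_fun_add (hdiff p) (hdiff q), add_apply, hp, hq]
  | mul_X p j hp =>
    have hj := hasFDerivAt_apply (𝕜 := 𝕜) (F' := fun _ : σ => 𝕜) j y
    simp only [eval_mul, eval_X]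
    rw [((hdiff p).hasFDerivAt.fun_mul hj).fderiv, add_apply, smul_apply, smul_apply, hp,
      pderiv_mul, pderiv_X]
    by_cases hij : i = j <;> simp [hij, add_comm, mul_comm]

lemma frameDeriv_eval (p : MvPolynomial σ 𝕜) (L : List σ) :
    frameDeriv 𝕜 (Pi.basisFun 𝕜 σ) L (fun y => eval y p) =
      fun y => eval y (L.foldr (fun i q => pderiv i q) p) := by
  induction L with
  | nil => rfl
  | cons i L ih =>
    funext y
    rw [frameDeriv_cons_apply, ih, fderiv_eval_apply_basisFun, List.foldr_cons]

end Polynomial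

section Correlators

variable {n : ℕ}

/-- The index `n` of the coordinate along the point class of the quadric. -/
abbrev ptIdx (n : ℕ) : Fin (n + 2) := (Fin.last n).castSucc

/-- The index `n + 1` of the coordinate along the primitive class of the quadric. -/
abbrev primIdx (n : ℕ) : Fin (n + 2) := Fin.last (n + 1)

lemma multiset_triple_eq_iff {a b c d e f : ℕ} :
    ({a, b, c} : Multiset ℕ) = {d, e, f} ↔
      (a = d ∧ b = e ∧ c = f) ∨ (a = d ∧ b = f ∧ c = e) ∨ (a = e ∧ b = d ∧ c = f) ∨
      (a = e ∧ b = f ∧ c = d) ∨ (a = f ∧ b = d ∧ c = e) ∨ (a = f ∧ b = e ∧ c = d) := by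
  change ((↑[a, b, c] : Multiset ℕ) = ↑[d, e, f]) ↔ _
  simp only [Multiset.coe_eq_coe, List.cons_perm_iff_perm_erase, List.erase_cons, beq_iff_eq,
    List.mem_cons, List.not_mem_nil, or_false, List.erase_nil]
  grind

lemma exists_multiset_triple_iff {a b c : ℕ} :
    (∃ i : ℕ, 1 ≤ i ∧ i ≤ n - 1 ∧ ({a, b, c} : Multiset ℕ) = {i, n - i, n}) ↔
      (a = n ∧ b + c = n ∧ 1 ≤ b ∧ 1 ≤ c) ∨ (b = n ∧ a + c = n ∧ 1 ≤ a ∧ 1 ≤ c) ∨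
        (c = n ∧ a + b = n ∧ 1 ≤ a ∧ 1 ≤ b) := by
  simp only [multiset_triple_eq_iff]
  constructor
  · rintro ⟨i, hi, hin, h⟩
    omega
  · rintro (h | h | h)
    · exact ⟨b, by omega⟩
    · exact ⟨a, by omega⟩
    · exact ⟨a, by omega⟩

lemma corr3_one (hn : 2 ≤ n) (i j : Fin (n + 2)) :
    corr3 n i 1 j = if (i : ℕ) + 1 + j = n then 2 else
      if ((i : ℕ) = n ∧ (j : ℕ) + 1 = n) ∨ ((j : ℕ) = n ∧ (i : ℕ) + 1 = n) then 4 else 0 := by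
  unfold corr3
  simp only [exists_multiset_triple_iff]
  simp only [multiset_triple_eq_iff, Fin.val_one]
  have := i.2
  by_cases hsum : (i : ℕ) + 1 + j = n
  · rw [if_neg (by omega), if_neg (by omega), if_pos (by omega), if_pos hsum]
  by_cases hpt : ((i : ℕ) = n ∧ (j : ℕ) + 1 = n) ∨ ((j : ℕ) = n ∧ (i : ℕ) + 1 = n)
  · rw [if_neg (by omega), if_neg (by omega), if_neg (by omega), if_pos (by omega),
      if_neg hsum, if_pos hpt]
  · rw [if_neg hsum, if_neg hpt]
    iterate 6 rw [if_neg (by omega)]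

lemma corr3_prim_one (hn : 2 ≤ n) (i : Fin (n + 2)) : corr3 n i (primIdx n) 1 = 0 := by
  unfold corr3
  simp only [exists_multiset_triple_iff]
  simp only [multiset_triple_eq_iff, Fin.val_one, Fin.val_last]
  have := i.2
  iterate 6 rw [if_neg (by omega)]

lemma corr3_prim_pt (hn : 2 ≤ n) (i : Fin (n + 2)) :
    corr3 n i (primIdx n) (ptIdx n) = if i = primIdx n then -4 else 0 := by
  unfold corr3
  simp only [exists_multiset_triple_iff]
  simp only [multiset_triple_eq_iff, Fin.ext_iff, Fin.val_last, Fin.val_castSucc]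
  have := i.2
  by_cases hi : (i : ℕ) = n + 1
  · rw [if_neg (by omega), if_pos (by simp [hi]), if_pos hi]
  · rw [if_neg hi]
    iterate 6 rw [if_neg (by omega)]

end Correlators

lemma exists_eq_cons_cons_of_two_le_length {α : Type*} {L : List α} (hL : 2 ≤ L.length) :
    ∃ a b S, L = a :: b :: S := by
  match L, hL with
  | a :: b :: S, _ => exact ⟨a, b, S, rfl⟩

section Quadric

local notation "∂" => frameDeriv ℂ (Pi.basisFun ℂ (Fin (_ + 2)))

local notation "⟪" φ "," ψ "⟫" => gradPairing (Pi.basisFun ℂ (Fin (_ + 2))) (ginv _) φ ψ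

variable {n : ℕ} {f φ ψ : (Fin (n + 2) → ℂ) → ℂ} {x : Fin (n + 2) → ℂ}

lemma pd_eventuallyEq_frameDeriv {G : (Fin (n + 2) → ℂ) → ℂ} {L : List (Fin (n + 2))}
    (hf : AnalyticAt ℂ f x) (hG : G =ᶠ[nhds x] ∂ L f) (i : Fin (n + 2)) :
    pd n i G =ᶠ[nhds x] ∂ (i :: L) f := by
  filter_upwards [hf.eventually_analyticAt, hG.eventuallyEq_nhds] with y hfy hGy
  have hcurve : HasDerivAt (Function.update y i) (Pi.single i 1) (y i) :=
    hasDerivAt_update y i (y i)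
  have hLf := (analyticAt_frameDeriv (v := Pi.basisFun ℂ (Fin (n + 2))) L hfy).differentiableAt
  have hGd : HasFDerivAt G (fderiv ℂ (∂ L f) y) (Function.update y i (y i)) := by
    rw [Function.update_eq_self]
    exact hLf.hasFDerivAt.congr_of_eventuallyEq hGy
  rw [frameDeriv_cons_apply, Pi.basisFun_apply]
  exact (hGd.comp_hasDerivAt (y i) hcurve).deriv

lemma pd_pd_pd_eventuallyEq_frameDeriv (hf : AnalyticAt ℂ f x) (a b c : Fin (n + 2)) :
    pd n a (pd n b (pd n c f)) =ᶠ[nhds x] ∂ [a, b, c] f :=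
  pd_eventuallyEq_frameDeriv hf (pd_eventuallyEq_frameDeriv hf
    (pd_eventuallyEq_frameDeriv (L := []) hf .rfl c) b) a

/-- The index of the coordinate dual to the `i`-th one under the flat metric. -/
def dualIdx (n : ℕ) (i : Fin (n + 2)) : Fin (n + 2) :=
  if h : (i : ℕ) ≤ n then ⟨n - i, by omega⟩ else i

lemma dualIdx_val (i : Fin (n + 2)) :
    (dualIdx n i : ℕ) = if (i : ℕ) ≤ n then n - (i : ℕ) else (i : ℕ) := by
  unfold dualIdx
  split_ifs <;> rfl

lemma dualIdx_eq_primIdx_iff {i : Fin (n + 2)} : dualIdx n i = primIdx n ↔ i = primIdx n := by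
  rw [Fin.ext_iff, Fin.ext_iff, dualIdx_val, Fin.val_last]
  split_ifs <;> omega

lemma ginv_comm (i j : Fin (n + 2)) : ginv n i j = ginv n j i := by
  unfold ginv
  exact if_congr (by omega) rfl rfl

lemma ginv_eq (i j : Fin (n + 2)) : ginv n i j = if j = dualIdx n i then 1 / 2 else 0 := by
  unfold ginv
  refine if_congr ?_ rfl rfl
  rw [Fin.ext_iff, dualIdx_val]
  split_ifs <;> omega

lemma gradPairing_ginv (φ ψ : (Fin (n + 2) → ℂ) → ℂ) (x : Fin (n + 2) → ℂ) :
    ⟪φ, ψ⟫ x = ∑ i, 1 / 2 * ∂ [i] φ x * ∂ [dualIdx n i] ψ x := by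
  refine Finset.sum_congr rfl fun i _ => ?_
  simp only [ginv_eq, mul_ite, mul_zero, ite_mul, zero_mul, Finset.sum_ite_eq', Finset.mem_univ,
    if_true]
  ring

/-- The weight of the `i`-th coordinate in the Euler field. -/
noncomputable def eulerWeight (n : ℕ) (i : Fin (n + 2)) : ℂ :=
  if (i : ℕ) ≤ n then 1 - (i : ℕ) else 1 - n / 2

lemma eulerWeight_ptIdx : eulerWeight n (ptIdx n) = 1 - n :=
  if_pos le_rfl

lemma eulerWeight_primIdx : eulerWeight n (primIdx n) = 1 - n / 2 :=
  if_neg (Nat.not_succ_le_self n)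

/-- The linear part of the Euler field, as a linear endomorphism. -/
noncomputable def eulerLinear (n : ℕ) : (Fin (n + 2) → ℂ) →L[ℂ] (Fin (n + 2) → ℂ) :=
  ContinuousLinearMap.pi fun i => eulerWeight n i • ContinuousLinearMap.proj i

lemma eulerLinear_basisFun (i : Fin (n + 2)) :
    eulerLinear n (Pi.basisFun ℂ _ i) = eulerWeight n i • Pi.basisFun ℂ _ i := by
  ext j
  by_cases hij : j = i <;> simp [eulerLinear, hij]

lemma fderiv_apply_eulerLinear (f : (Fin (n + 2) → ℂ) → ℂ) (y : Fin (n + 2) → ℂ) :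
    fderiv ℂ f y (eulerLinear n y) =
      (∑ i : Fin (n + 1), (1 - ((i : ℕ) : ℂ)) * y i.castSucc * ∂ [i.castSucc] f y) +
        (1 - (n : ℂ) / 2) * y (Fin.last (n + 1)) * ∂ [Fin.last (n + 1)] f y := by
  have hle (i : Fin (n + 1)) : (i : ℕ) ≤ n := Nat.lt_succ_iff.1 i.2
  rw [← (Pi.basisFun ℂ (Fin (n + 2))).sum_repr (eulerLinear n y), map_sum, Fin.sum_univ_castSucc]
  simp only [map_smul, smul_eq_mul, Pi.basisFun_repr, eulerLinear, ContinuousLinearMap.coe_pi',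
    eulerWeight, smul_apply, ContinuousLinearMap.proj_apply, Fin.val_castSucc, hle, if_true,
    Fin.val_last, Nat.not_succ_le_self, if_false]
  rfl

namespace IsQuadricFrobeniusPotential

variable {U : Set (Fin (n + 2) → ℂ)} {F F' : (Fin (n + 2) → ℂ) → ℂ}

section Potential

lemma analyticAt (hU : U ∈ nhds 0) (hF : IsQuadricFrobeniusPotential n U F) : AnalyticAt ℂ F 0 :=
  hF.1 0 (mem_of_mem_nhds hU)

lemma vanishesToOrder_three (hU : U ∈ nhds 0) (hF : IsQuadricFrobeniusPotential n U F) :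
    VanishesToOrder ℂ (Pi.basisFun ℂ (Fin (n + 2))) 3 F 0 := by
  have hA := hF.analyticAt hU
  have hpd (i : Fin (n + 2)) := pd_eventuallyEq_frameDeriv (L := []) hA .rfl i
  obtain ⟨-, h0, h1, h2, -⟩ := hF
  intro L hL
  match L with
  | [] => exact h0
  | [i] => exact (hpd i).self_of_nhds.symm.trans (h1 i)
  | [i, j] => exact (pd_eventuallyEq_frameDeriv hA (hpd j) i).self_of_nhds.symm.trans (h2 i j)

lemma frameDeriv_three (hU : U ∈ nhds 0) (hF : IsQuadricFrobeniusPotential n U F)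
    (a b c : Fin (n + 2)) : ∂ [a, b, c] F 0 = corr3 n a b c := by
  rw [← (pd_pd_pd_eventuallyEq_frameDeriv (hF.analyticAt hU) a b c).self_of_nhds]
  obtain ⟨-, -, -, -, -, -, -, hcorr⟩ := hF
  exact hcorr a b c

lemma frameDeriv_zero_cons (hU : U ∈ nhds 0) (hF : IsQuadricFrobeniusPotential n U F)
    (a b : Fin (n + 2)) : ∂ [0, a, b] F =ᶠ[nhds 0] fun _ => gmat n a b := by
  have hpd := pd_pd_pd_eventuallyEq_frameDeriv (hF.analyticAt hU) 0 a b
  obtain ⟨-, -, -, -, hflat, -⟩ := hF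
  filter_upwards [hU, hpd] with y hy hpd
  rw [← hpd, hflat a b y hy]

theorem wdvv (hU : U ∈ nhds 0) (hF : IsQuadricFrobeniusPotential n U F) (a b c d : Fin (n + 2)) :
    ⟪∂ [a, b] F, ∂ [c, d] F⟫ =ᶠ[nhds 0] ⟪∂ [a, c] F, ∂ [b, d] F⟫ := by
  have hA := hF.analyticAt hU
  have hpd : ∀ᶠ y in nhds 0, ∀ a b c, pd n a (pd n b (pd n c F)) y = ∂ [a, b, c] F y := by
    simp only [Filter.eventually_all]
    exact pd_pd_pd_eventuallyEq_frameDeriv hA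
  obtain ⟨-, -, -, -, -, hW, -⟩ := hF
  filter_upwards [hU, hpd, hA.eventually_analyticAt] with y hy hpd hAy
  have hexpand (a b c d : Fin (n + 2)) : ⟪∂ [a, b] F, ∂ [c, d] F⟫ y =
      ∑ i, ∑ j, ∂ [a, b, i] F y * ginv n i j * ∂ [j, c, d] F y := by
    simp only [gradPairing, frameDeriv_comm [_] [a, b] hAy]
    rfl
  rw [hexpand, hexpand]
  simpa only [hpd] using hW a b c d y hy

theorem euler (hU : U ∈ nhds 0) (hF : IsQuadricFrobeniusPotential n U F) {L : List (Fin (n + 2))}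
    (hL : 3 ≤ L.length) :
    n * ∂ (1 :: L) F 0 = (3 - n - (L.map (eulerWeight n)).sum) * ∂ L F 0 := by
  have hA := hF.analyticAt hU
  have hpd : ∀ᶠ y in nhds 0, ∀ i, pd n i F y = ∂ [i] F y :=
    Filter.eventually_all.2 (pd_eventuallyEq_frameDeriv (L := []) hA .rfl)
  obtain ⟨-, -, -, -, -, -, ⟨p, hp, hE⟩, -⟩ := hF
  have heuler : (fun y => fderiv ℂ F y ((n : ℂ) • Pi.basisFun ℂ _ 1 + eulerLinear n y)) =ᶠ[nhds 0]
      fun y => (3 - n : ℂ) • F y + MvPolynomial.eval y p := by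
    filter_upwards [hU, hpd] with y hy hpd
    have hEy := hE y hy
    simp only [hpd] at hEy
    rw [map_add, map_smul, fderiv_apply_eulerLinear, ← hEy, smul_eq_mul, smul_eq_mul]
    change (n : ℂ) * ∂ [1] F y + _ = _
    ring
  have hpL : ∂ L (fun y => MvPolynomial.eval y p) 0 = 0 := by
    rw [frameDeriv_eval, foldr_pderiv_eq_zero (by omega)]
    exact map_zero _
  have h := fderiv_frameDeriv_zero_of_euler eulerLinear_basisFun hA heuler (analyticAt_eval p 0) hpL
  rwa [map_smul] at h

end Potential

section Correlators

variable (hn : 2 ≤ n) (hU : U ∈ nhds 0) (hF : IsQuadricFrobeniusPotential n U F)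

include hn hU hF

lemma gradPairing_one_mid {d e : Fin (n + 2)} (hd : 1 ≤ (d : ℕ)) (he : (e : ℕ) = d + 1)
    (hen : (e : ℕ) ≤ n) (hφ : ∂ [0] φ 0 = 0) : ⟪φ, ∂ [1, d] F⟫ 0 = ∂ [e] φ 0 := by
  have hcorr (j : Fin (n + 2)) : ∂ [j] (∂ [1, d] F) 0 = corr3 n j 1 d :=
    hF.frameDeriv_three hU j 1 d
  rw [gradPairing_ginv, Finset.sum_eq_single e _ (by simp)]
  · rw [hcorr, corr3_one hn, if_pos (by rw [dualIdx_val, if_pos hen]; omega)]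
    ring
  · intro i _ hi
    rw [Ne, Fin.ext_iff] at hi
    rcases eq_or_ne i 0 with rfl | hi0
    · rw [hφ, mul_zero, zero_mul]
    · have hi0' := Fin.val_ne_zero_iff.2 hi0
      rw [hcorr, corr3_one hn, dualIdx_val, if_neg (by split_ifs <;> omega),
        if_neg (by split_ifs <;> omega), mul_zero]

lemma gradPairing_one_pt : ⟪φ, ∂ [1, ptIdx n] F⟫ 0 = 2 * ∂ [1] φ 0 := by
  have hcorr (j : Fin (n + 2)) :
      ∂ [j] (∂ [1, ptIdx n] F) 0 = if (j : ℕ) + 1 = n then 4 else 0 := by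
    refine (hF.frameDeriv_three hU j 1 _).trans ?_
    rw [corr3_one hn, if_neg (by simp)]
    simp
  rw [gradPairing_ginv, Finset.sum_eq_single 1 _ (by simp)]
  · rw [hcorr, dualIdx_val, Fin.val_one, if_pos (by split_ifs <;> omega)]
    ring
  · intro i _ hi
    rw [Ne, Fin.ext_iff, Fin.val_one] at hi
    rw [hcorr, dualIdx_val, if_neg (by split_ifs <;> omega), mul_zero]

lemma gradPairing_prim_one : ⟪φ, ∂ [primIdx n, 1] F⟫ 0 = 0 := by
  have hcorr (j : Fin (n + 2)) : ∂ [j] (∂ [primIdx n, 1] F) 0 = 0 :=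
    (hF.frameDeriv_three hU j _ 1).trans (corr3_prim_one hn j)
  simp only [gradPairing_ginv, hcorr, mul_zero, Finset.sum_const_zero]

lemma gradPairing_prim_pt : ⟪φ, ∂ [primIdx n, ptIdx n] F⟫ 0 = -2 * ∂ [primIdx n] φ 0 := by
  have hcorr (j : Fin (n + 2)) :
      ∂ [j] (∂ [primIdx n, ptIdx n] F) 0 = if j = primIdx n then -4 else 0 :=
    (hF.frameDeriv_three hU j _ _).trans (corr3_prim_pt hn j)
  simp only [gradPairing_ginv, hcorr, dualIdx_eq_primIdx_iff, mul_ite, mul_zero,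
    Finset.sum_ite_eq', Finset.mem_univ, if_true]
  ring

lemma frameDeriv_prim_prim_one_pt : ∂ [primIdx n, primIdx n, 1, ptIdx n] F 0 = -4 := by
  have hperm : [primIdx n, primIdx n, 1, ptIdx n].Perm [1, primIdx n, primIdx n, ptIdx n] :=
    List.perm_middle (l₁ := [primIdx n, primIdx n])
  have h := hF.euler hU (L := [primIdx n, primIdx n, ptIdx n]) le_rfl
  rw [frameDeriv_perm hperm (hF.analyticAt hU)]
  rw [hF.frameDeriv_three hU, corr3_prim_pt hn, if_pos rfl] at h
  have hn0 : (n : ℂ) ≠ 0 := Nat.cast_ne_zero.2 (by omega)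
  apply mul_left_cancel₀ hn0
  rw [h]
  simp only [List.map_cons, List.map_nil, List.sum_cons, List.sum_nil, eulerWeight_primIdx,
    eulerWeight_ptIdx]
  ring

lemma gradPairing_prim_one_pt (hφ : ∀ i : Fin (n + 2), (i : ℕ) ≤ n → ∂ [i] φ 0 = 0) :
    ⟪φ, ∂ [primIdx n, 1, ptIdx n] F⟫ 0 = -2 * ∂ [primIdx n] φ 0 := by
  have hcorr : ∂ [primIdx n] (∂ [primIdx n, 1, ptIdx n] F) 0 = -4 :=
    hF.frameDeriv_prim_prim_one_pt hn hU
  rw [gradPairing_ginv, Finset.sum_eq_single (primIdx n) _ (by simp)]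
  · rw [dualIdx_eq_primIdx_iff.2 rfl, hcorr]
    ring
  · intro i _ hi
    rw [Ne, Fin.ext_iff, Fin.val_last] at hi
    rw [hφ i (by omega), mul_zero, zero_mul]

end Correlators

section Difference

variable (hU : U ∈ nhds 0) (hF : IsQuadricFrobeniusPotential n U F)
  (hF' : IsQuadricFrobeniusPotential n U F')

include hU hF hF'

lemma analyticAt_sub : AnalyticAt ℂ (F - F') 0 :=
  (hF.analyticAt hU).sub (hF'.analyticAt hU)

theorem frameDeriv_wdvv_sub (S : List (Fin (n + 2))) (a b c d : Fin (n + 2)) :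
    ∂ S ⟪∂ [a, b] (F - F'), ∂ [c, d] F⟫ 0 + ∂ S ⟪∂ [c, d] (F - F'), ∂ [a, b] F'⟫ 0 =
      ∂ S ⟪∂ [a, c] (F - F'), ∂ [b, d] F⟫ 0 + ∂ S ⟪∂ [b, d] (F - F'), ∂ [a, c] F'⟫ 0 := by
  have hA := hF.analyticAt hU
  have hA' := hF'.analyticAt hU
  have hD := hF.analyticAt_sub hU hF'
  have hpair (L K : List (Fin (n + 2))) {G : (Fin (n + 2) → ℂ) → ℂ} (hG : AnalyticAt ℂ G 0) :
      AnalyticAt ℂ ⟪∂ L (F - F'), ∂ K G⟫ 0 :=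
    analyticAt_gradPairing (analyticAt_frameDeriv L hD) (analyticAt_frameDeriv K hG)
  -- Polarization: `⟪dD, dF⟫ + ⟪dF', dD⟫ = ⟪dF, dF⟫ - ⟪dF', dF'⟫` for `D = F - F'`.
  have hpolar (L L' : List (Fin (n + 2))) :
      (fun y => ⟪∂ L (F - F'), ∂ L' F⟫ y + ⟪∂ L' (F - F'), ∂ L F'⟫ y) =ᶠ[nhds 0]
        fun y => ⟪∂ L F, ∂ L' F⟫ y - ⟪∂ L F', ∂ L' F'⟫ y := by
    filter_upwards [hA.eventually_analyticAt, hA'.eventually_analyticAt] with y hAy hAy'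
    rw [gradPairing_frameDeriv_sub _ hAy hAy', gradPairing_frameDeriv_sub _ hAy hAy',
      gradPairing_comm ginv_comm (φ := ∂ L' F), gradPairing_comm ginv_comm (φ := ∂ L' F')]
    ring
  have hwdvv := (hpolar [a, b] [c, d]).trans
    (((hF.wdvv hU a b c d).fun_sub (hF'.wdvv hU a b c d)).trans (hpolar [a, c] [b, d]).symm)
  have h := (frameDeriv_congr (𝕜 := ℂ) (v := Pi.basisFun ℂ (Fin (n + 2))) S hwdvv).self_of_nhds
  rwa [frameDeriv_add S (hpair _ _ hA) (hpair _ _ hA'),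
    frameDeriv_add S (hpair _ _ hA) (hpair _ _ hA')] at h

theorem euler_sub {L : List (Fin (n + 2))} (hL : 3 ≤ L.length) :
    n * ∂ (1 :: L) (F - F') 0 = (3 - n - (L.map (eulerWeight n)).sum) * ∂ L (F - F') 0 := by
  rw [frameDeriv_sub _ (hF.analyticAt hU) (hF'.analyticAt hU),
    frameDeriv_sub _ (hF.analyticAt hU) (hF'.analyticAt hU)]
  linear_combination hF.euler hU hL - hF'.euler hU hL

lemma frameDeriv_one_cons_sub_eq_zero (hn : n ≠ 0) {L : List (Fin (n + 2))} (hL : 3 ≤ L.length)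
    (hLD : ∂ L (F - F') 0 = 0) : ∂ (1 :: L) (F - F') 0 = 0 := by
  have h := hF.euler_sub hU hF' hL
  rw [hLD, mul_zero] at h
  exact (mul_eq_zero.1 h).resolve_left (Nat.cast_ne_zero.2 hn)

lemma vanishesToOrder_four_sub :
    VanishesToOrder ℂ (Pi.basisFun ℂ (Fin (n + 2))) 4 (F - F') 0 := by
  intro L hL
  rw [frameDeriv_sub _ (hF.analyticAt hU) (hF'.analyticAt hU)]
  rcases Nat.lt_succ_iff_lt_or_eq.1 hL with hlt | heq
  · rw [hF.vanishesToOrder_three hU L hlt, hF'.vanishesToOrder_three hU L hlt, sub_zero]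
  · obtain ⟨a, b, c, rfl⟩ := List.length_eq_three.1 heq
    rw [hF.frameDeriv_three hU, hF'.frameDeriv_three hU, sub_self]

lemma vanishesAlong_zero_sub {M : ℕ} (hM : 3 ≤ M) :
    VanishesAlong ℂ (Pi.basisFun ℂ (Fin (n + 2))) M (F - F') 0 0 := by
  refine vanishesAlong_of_cons (hF.analyticAt_sub hU hF') fun L hL => ?_
  obtain ⟨a, b, S, rfl⟩ := exists_eq_cons_cons_of_two_le_length (by omega : 2 ≤ L.length)
  have hflat : ∂ [0, a, b] (F - F') =ᶠ[nhds 0] 0 := by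
    filter_upwards [(hF.analyticAt hU).eventually_analyticAt,
      (hF'.analyticAt hU).eventually_analyticAt, hF.frameDeriv_zero_cons hU a b,
      hF'.frameDeriv_zero_cons hU a b] with y hAy hAy' hy hy'
    rw [frameDeriv_sub _ hAy hAy', hy, hy', sub_self, Pi.zero_apply]
  have h := (frameDeriv_congr (𝕜 := ℂ) (v := Pi.basisFun ℂ (Fin (n + 2))) S hflat).self_of_nhds
  rw [frameDeriv_zero_fun, ← frameDeriv_append] at h
  exact (frameDeriv_perm List.perm_append_comm (hF.analyticAt_sub hU hF')).trans h

variable {M : ℕ} (hvan : VanishesToOrder ℂ (Pi.basisFun ℂ (Fin (n + 2))) M (F - F') 0)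

include hvan

theorem wdvv_sub_leading {S : List (Fin (n + 2))} (hS : S.length + 3 = M) (a b c d : Fin (n + 2)) :
    ⟪∂ (S ++ [a, b]) (F - F'), ∂ [c, d] F⟫ 0 + ⟪∂ (S ++ [c, d]) (F - F'), ∂ [a, b] F'⟫ 0 =
      ⟪∂ (S ++ [a, c]) (F - F'), ∂ [b, d] F⟫ 0 +
        ⟪∂ (S ++ [b, d]) (F - F'), ∂ [a, c] F'⟫ 0 := by
  have hD := hF.analyticAt_sub hU hF'
  have hlead (a b : Fin (n + 2)) (L : List (Fin (n + 2))) {G : (Fin (n + 2) → ℂ) → ℂ}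
      (hG : AnalyticAt ℂ G 0) : ∂ S ⟪∂ [a, b] (F - F'), ∂ L G⟫ 0 =
        ⟪∂ (S ++ [a, b]) (F - F'), ∂ L G⟫ 0 := by
    rw [frameDeriv_append]
    refine frameDeriv_gradPairing_of_vanishesToOrder (analyticAt_frameDeriv _ hD)
      (analyticAt_frameDeriv _ hG) (hvan.frameDeriv ?_)
    simp only [List.length_cons, List.length_nil]
    omega
  have h := hF.frameDeriv_wdvv_sub hU hF' S a b c d
  rwa [hlead _ _ _ (hF.analyticAt hU), hlead _ _ _ (hF.analyticAt hU),
    hlead _ _ _ (hF'.analyticAt hU), hlead _ _ _ (hF'.analyticAt hU)] at h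

variable (hn : 2 ≤ n) (hM : 4 ≤ M)

include hn hM

lemma vanishesAlong_one_sub : VanishesAlong ℂ (Pi.basisFun ℂ (Fin (n + 2))) M (F - F') 0 1 :=
  vanishesAlong_of_cons (hF.analyticAt_sub hU hF') fun L hL =>
    hF.frameDeriv_one_cons_sub_eq_zero hU hF' (by omega) (by omega) (hvan L (by omega))

lemma vanishesAlong_succ_sub {d e : Fin (n + 2)} (hd : 1 ≤ (d : ℕ)) (he : (e : ℕ) = d + 1)
    (hen : (e : ℕ) ≤ n) (hvan_d : VanishesAlong ℂ (Pi.basisFun ℂ (Fin (n + 2))) M (F - F') 0 d) :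
    VanishesAlong ℂ (Pi.basisFun ℂ (Fin (n + 2))) M (F - F') 0 e := by
  have hD := hF.analyticAt_sub hU hF'
  have hvan_zero := hF.vanishesAlong_zero_sub hU hF' (M := M) (by omega)
  have hvan_one := hF.vanishesAlong_one_sub hU hF' hvan hn hM
  refine vanishesAlong_of_cons hD fun L hL => ?_
  obtain ⟨a, b, S, rfl⟩ := exists_eq_cons_cons_of_two_le_length (by omega : 2 ≤ L.length)
  simp only [List.length_cons] at hL
  have hzero {k : Fin (n + 2)} (hk : VanishesAlong ℂ (Pi.basisFun ℂ (Fin (n + 2))) M (F - F') 0 k)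
      (a b : Fin (n + 2)) (hkab : k ∈ [a, b]) (ψ : (Fin (n + 2) → ℂ) → ℂ) :
      ⟪∂ (S ++ [a, b]) (F - F'), ψ⟫ 0 = 0 := by
    refine gradPairing_eq_zero fun i => hk (i :: (S ++ [a, b])) ?_ ?_
    · simp only [List.length_cons, List.length_append, List.length_nil]
      omega
    · exact List.mem_cons_of_mem _ (List.mem_append_right _ hkab)
  have hflat : ∂ [0] (∂ (S ++ [a, b]) (F - F')) 0 = 0 := by
    refine hvan_zero (0 :: (S ++ [a, b])) ?_ List.mem_cons_self
    simp only [List.length_cons, List.length_append, List.length_nil]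
    omega
  have hwdvv := hF.wdvv_sub_leading hU hF' hvan (S := S) (by omega) a b 1 d
  rw [hzero hvan_one 1 d (by simp), hzero hvan_one a 1 (by simp), hzero hvan_d b d (by simp),
    add_zero, add_zero, hF.gradPairing_one_mid hn hU hd he hen hflat] at hwdvv
  exact (frameDeriv_perm (List.perm_append_comm.cons e) hD).trans hwdvv

theorem vanishesAlong_sub {e : Fin (n + 2)} (he : (e : ℕ) ≤ n) :
    VanishesAlong ℂ (Pi.basisFun ℂ (Fin (n + 2))) M (F - F') 0 e := by
  obtain ⟨e, hen⟩ := e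
  induction e with
  | zero => exact hF.vanishesAlong_zero_sub hU hF' (by omega)
  | succ d ih =>
    rcases Nat.eq_zero_or_pos d with rfl | hd
    · exact hF.vanishesAlong_one_sub hU hF' hvan hn hM
    · exact hF.vanishesAlong_succ_sub hU hF' hvan hn hM (d := ⟨d, by omega⟩) hd rfl he
        (ih _ (Nat.le_of_succ_le he))

end Difference

section Primitive

variable (hn : 2 ≤ n) (hU : U ∈ nhds 0) (hF : IsQuadricFrobeniusPotential n U F)
  (hF' : IsQuadricFrobeniusPotential n U F') {k : ℕ} (hk : 1 ≤ k)
  (hvan : VanishesToOrder ℂ (Pi.basisFun ℂ (Fin (n + 2))) (k + 3) (F - F') 0)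

include hn hU hF hF' hk hvan

lemma frameDeriv_gradPairing_prim_one_pt :
    ∂ (List.replicate (k + 1) (primIdx n))
        ⟪∂ [primIdx n, 1] (F - F'), ∂ [primIdx n, ptIdx n] F⟫ 0 =
      -2 * ∂ (1 :: List.replicate (k + 3) (primIdx n)) (F - F') 0 := by
  have hD := hF.analyticAt_sub hU hF'
  have hvan_one := hF.vanishesAlong_one_sub hU hF' hvan hn (by omega)
  rw [frameDeriv_gradPairing_of_vanishesAlong (e := 1) (by simp) hD
    (analyticAt_frameDeriv _ (hF.analyticAt hU)) (by simpa using hvan) (by simpa using hvan_one),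
    hF.gradPairing_prim_pt hn hU]
  congr 1
  have hperm : (primIdx n :: (List.replicate (k + 1) (primIdx n) ++ [primIdx n, 1])).Perm
      (1 :: List.replicate (k + 3) (primIdx n)) := by
    grind
  exact frameDeriv_perm hperm hD

lemma frameDeriv_gradPairing_prim_pt_one :
    ∂ (List.replicate (k + 1) (primIdx n))
      ⟪∂ [primIdx n, ptIdx n] (F - F'), ∂ [primIdx n, 1] F'⟫ 0 = 0 := by
  have hvan_pt := hF.vanishesAlong_sub hU hF' hvan hn (by omega) (e := ptIdx n) le_rfl
  rw [frameDeriv_gradPairing_of_vanishesAlong (e := ptIdx n) (by simp) (hF.analyticAt_sub hU hF')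
    (analyticAt_frameDeriv _ (hF'.analyticAt hU)) (by simpa using hvan) (by simpa using hvan_pt),
    hF'.gradPairing_prim_one hn hU]

lemma frameDeriv_gradPairing_one_pt_prim :
    ∂ (List.replicate (k + 1) (primIdx n))
      ⟪∂ [1, ptIdx n] (F - F'), ∂ [primIdx n, primIdx n] F'⟫ 0 = 0 := by
  have hD := hF.analyticAt_sub hU hF'
  have hvan_pt := hF.vanishesAlong_sub hU hF' hvan hn (by omega) (e := ptIdx n) le_rfl
  rw [frameDeriv_gradPairing_of_vanishesAlong (e := ptIdx n) (by simp) hD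
    (analyticAt_frameDeriv _ (hF'.analyticAt hU)) (by simpa using hvan) (by simpa using hvan_pt)]
  refine gradPairing_eq_zero fun i => ?_
  have hperm : (i :: (List.replicate (k + 1) (primIdx n) ++ [1, ptIdx n])).Perm
      (1 :: i :: ptIdx n :: List.replicate (k + 1) (primIdx n)) := by
    grind
  refine (frameDeriv_perm hperm hD).trans ?_
  refine hF.frameDeriv_one_cons_sub_eq_zero hU hF' (by omega) (by simp) ?_
  exact hvan_pt _ (by simp) (by simp)

lemma frameDeriv_gradPairing_prim_prim :
    ∂ (List.replicate (k + 1) (primIdx n))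
        ⟪∂ [primIdx n, primIdx n] (F - F'), ∂ [1, ptIdx n] F⟫ 0 =
      2 * ∂ (1 :: List.replicate (k + 3) (primIdx n)) (F - F') 0 -
        2 * (k + 1) * ∂ (List.replicate (k + 3) (primIdx n)) (F - F') 0 := by
  have hA := hF.analyticAt hU
  have hD := hF.analyticAt_sub hU hF'
  have happend (m : ℕ) : ∂ (List.replicate m (primIdx n)) (∂ [primIdx n, primIdx n] (F - F')) =
      ∂ (List.replicate (m + 2) (primIdx n)) (F - F') := by
    rw [List.replicate_add, frameDeriv_append]
    rfl
  have hsub (i : Fin (n + 2)) (hi : (i : ℕ) ≤ n) :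
      ∂ [i] (∂ (List.replicate (k + 2) (primIdx n)) (F - F')) 0 = 0 :=
    hF.vanishesAlong_sub hU hF' hvan hn (by omega) hi
      (i :: List.replicate (k + 2) (primIdx n)) (by simp) (by simp)
  have hcorr (j : Fin (List.replicate (k + 1) (primIdx n)).length) :
      ⟪∂ ((List.replicate (k + 1) (primIdx n)).eraseIdx j) (∂ [primIdx n, primIdx n] (F - F')),
        ∂ [(List.replicate (k + 1) (primIdx n)).get j] (∂ [1, ptIdx n] F)⟫ 0 =
      -2 * ∂ (List.replicate (k + 3) (primIdx n)) (F - F') 0 := by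
    have hj : (j : ℕ) < k + 1 := j.2.trans_eq List.length_replicate
    rw [List.eraseIdx_replicate, if_pos hj, Nat.add_sub_cancel, happend, List.get_eq_getElem,
      List.getElem_replicate, ← frameDeriv_append]
    exact hF.gradPairing_prim_one_pt hn hU hsub
  rw [frameDeriv_gradPairing_of_vanishesToOrder_pred (analyticAt_frameDeriv _ hD)
    (analyticAt_frameDeriv _ hA) (hvan.frameDeriv (by simp)), happend,
    hF.gradPairing_one_pt hn hU, Finset.sum_congr rfl fun j _ => hcorr j, Finset.sum_const,
    Finset.card_univ, Fintype.card_fin, List.length_replicate, nsmul_eq_mul]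
  push_cast
  change 2 * ∂ (1 :: List.replicate (k + 3) (primIdx n)) (F - F') 0 + _ = _
  ring

theorem frameDeriv_replicate_prim_sub_eq_zero :
    ∂ (List.replicate (k + 3) (primIdx n)) (F - F') 0 = 0 := by
  have hwdvv := hF.frameDeriv_wdvv_sub hU hF' (List.replicate (k + 1) (primIdx n))
    (primIdx n) 1 (primIdx n) (ptIdx n)
  rw [hF.frameDeriv_gradPairing_prim_one_pt hn hU hF' hk hvan,
    hF.frameDeriv_gradPairing_prim_pt_one hn hU hF' hk hvan,
    hF.frameDeriv_gradPairing_prim_prim hn hU hF' hk hvan,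
    hF.frameDeriv_gradPairing_one_pt_prim hn hU hF' hk hvan] at hwdvv
  have heuler := hF.euler_sub hU hF' (L := List.replicate (k + 3) (primIdx n)) (by simp)
  rw [List.map_replicate, List.sum_replicate, eulerWeight_primIdx, nsmul_eq_mul] at heuler
  push_cast at heuler
  have hkC : (k : ℂ) * ∂ (List.replicate (k + 3) (primIdx n)) (F - F') 0 = 0 := by
    linear_combination (n / 4 : ℂ) * hwdvv + heuler
  exact (mul_eq_zero.1 hkC).resolve_left (Nat.cast_ne_zero.2 (by omega))

end Primitive

theorem frameDeriv_sub_eq_zero (hn : 2 ≤ n) (hU : U ∈ nhds 0)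
    (hF : IsQuadricFrobeniusPotential n U F) (hF' : IsQuadricFrobeniusPotential n U F')
    (L : List (Fin (n + 2))) : ∂ L (F - F') 0 = 0 := by
  induction hM : L.length using Nat.strong_induction_on generalizing L with
  | _ M ih =>
    rcases Nat.lt_or_ge M 4 with hlow | hM4
    · exact hF.vanishesToOrder_four_sub hU hF' L (hM ▸ hlow)
    have hvan : VanishesToOrder ℂ (Pi.basisFun ℂ (Fin (n + 2))) M (F - F') 0 :=
      fun L' hL' => ih L'.length hL' L' rfl
    by_cases hex : ∃ e ∈ L, (e : ℕ) ≤ n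
    · obtain ⟨e, heL, hen⟩ := hex
      exact hF.vanishesAlong_sub hU hF' hvan hn hM4 hen L hM heL
    · push Not at hex
      obtain ⟨k, rfl⟩ : ∃ k, M = k + 3 := ⟨M - 3, by omega⟩
      have hrep : L = List.replicate (k + 3) (primIdx n) := by
        refine List.eq_replicate_iff.2 ⟨hM, fun e he => Fin.eq_last_of_not_lt fun hlt => ?_⟩
        exact (hex e he).not_ge (Nat.lt_succ_iff.1 hlt)
      rw [hrep]
      exact hF.frameDeriv_replicate_prim_sub_eq_zero hn hU hF' (by omega) hvan

end IsQuadricFrobeniusPotential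

end Quadric

theorem quadric_frobenius_reconstruction_general {n : ℕ} (hn : 2 ≤ n)
    {U : Set (Fin (n + 2) → ℂ)} (hU : U ∈ nhds 0) {F F' : (Fin (n + 2) → ℂ) → ℂ}
    (hF : IsQuadricFrobeniusPotential n U F) (hF' : IsQuadricFrobeniusPotential n U F') :
    F =ᶠ[nhds 0] F' :=
  Filter.eventuallyEq_iff_sub.2 <| eventuallyEq_zero_of_frameDeriv_eq_zero (Pi.basisFun ℂ _)
    (hF.analyticAt_sub hU hF') (hF.frameDeriv_sub_eq_zero hn hU hF')

/-- **Reconstruction/uniqueness of the mirror Frobenius potential of the quadric**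
(Proposition 6.10). Let `n ≥ 4` be even and let `U` be an open neighborhood of `0` in
`ℂ^{n+2}`. If `F` and `F′` are two `ℂ`-analytic functions on `U`, each satisfying the
axioms of a potential of the Frobenius manifold mirror to `Qⁿ` (vanishing up to order 2 at
`0`, flat identity `∂_{y₀}` with metric `g`, WDVV, the Euler condition, and the same
prescribed length-3 correlators), then `F = F′` on some neighborhood of `0`. -/
theorem quadric_frobenius_reconstruction (n : ℕ) (hn : 4 ≤ n) (hev : Even n)
    (U : Set (Fin (n + 2) → ℂ)) (hU : IsOpen U) (h0 : (0 : Fin (n + 2) → ℂ) ∈ U)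
    (F F' : (Fin (n + 2) → ℂ) → ℂ)
    (hF : IsQuadricFrobeniusPotential n U F)
    (hF' : IsQuadricFrobeniusPotential n U F') :
    F =ᶠ[nhds (0 : Fin (n + 2) → ℂ)] F' :=
  quadric_frobenius_reconstruction_general (by omega) (hU.mem_nhds h0) hF hF'
end
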